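/- arXiv:1211.3442 — 2 statements merged into one kernel-verified Lean document; each statement's English description precedes it below -/
import Mathlib

section
/- Let S(z) = Σ_{n≥0} |S_n(1342)| zⁿ be the generating function (as a formal power series over ℚ) for 1342-avoiding permutations. Then S(z) satisfies the polynomial identity (S(z)(1 + 20z − 8z²) − 32z)² = S(z)² (1 − 8z)³; equivalently, S(z) = 32z / (1 + 20z − 8z² − (1−8z)^{3/2}). -/
/-! ### Patterns of length 3 and 4 as permutations (0-indexed values) -/

def p123 : Equiv.Perm (Fin 3) :=
  ⟨![0,1,2], ![0,1,2], by intro x; fin_cases x <;> rfl, by intro x; fin_cases x <;> rfl⟩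
def p132 : Equiv.Perm (Fin 3) :=
  ⟨![0,2,1], ![0,2,1], by intro x; fin_cases x <;> rfl, by intro x; fin_cases x <;> rfl⟩
def p213 : Equiv.Perm (Fin 3) :=
  ⟨![1,0,2], ![1,0,2], by intro x; fin_cases x <;> rfl, by intro x; fin_cases x <;> rfl⟩
def p231 : Equiv.Perm (Fin 3) :=
  ⟨![1,2,0], ![2,0,1], by intro x; fin_cases x <;> rfl, by intro x; fin_cases x <;> rfl⟩
def p312 : Equiv.Perm (Fin 3) :=
  ⟨![2,0,1], ![1,2,0], by intro x; fin_cases x <;> rfl, by intro x; fin_cases x <;> rfl⟩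
def p321 : Equiv.Perm (Fin 3) :=
  ⟨![2,1,0], ![2,1,0], by intro x; fin_cases x <;> rfl, by intro x; fin_cases x <;> rfl⟩
def p1342 : Equiv.Perm (Fin 4) :=
  ⟨![0,2,3,1], ![0,3,1,2], by intro x; fin_cases x <;> rfl, by intro x; fin_cases x <;> rfl⟩
def p1324 : Equiv.Perm (Fin 4) :=
  ⟨![0,2,1,3], ![0,2,1,3], by intro x; fin_cases x <;> rfl, by intro x; fin_cases x <;> rfl⟩

/-! ### Perfect matchings of `[2n] = {1, …, 2n}` as finsets of pairs `(i,j)`, `i < j` -/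

/-- `M` is a perfect matching of `{1, …, 2n}`. -/
def IsPerfectMatching (n : ℕ) (M : Finset (ℕ × ℕ)) : Prop :=
  (∀ p ∈ M, p.1 < p.2 ∧ 1 ≤ p.1 ∧ p.2 ≤ 2 * n) ∧
  ∀ x, 1 ≤ x → x ≤ 2 * n → ∃! p, p ∈ M ∧ (p.1 = x ∨ p.2 = x)

/-- The matching `M` contains the pattern `τ ∈ S_k`: there are
`i_1 < i_2 < ⋯ < i_{2k}` with `(i_a, i_{2k+1-τ(a)}) ∈ M` for all `1 ≤ a ≤ k`
(written here 0-indexed). -/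
def MatchContains {k : ℕ} (τ : Equiv.Perm (Fin k)) (M : Finset (ℕ × ℕ)) : Prop :=
  ∃ f : Fin (2 * k) → ℕ, StrictMono f ∧
    ∀ a : Fin k,
      (f ⟨a.1, by have := a.isLt; omega⟩,
       f ⟨2 * k - 1 - (τ a).1, by have := (τ a).isLt; omega⟩) ∈ M

def MatchAvoids {k : ℕ} (τ : Equiv.Perm (Fin k)) (M : Finset (ℕ × ℕ)) : Prop :=
  ¬ MatchContains τ M

/-! ### Dyck paths as lists of booleans (`true` = east step, `false` = south step) -/

/-- A Dyck path of semilength `n`, from `(0,n)` to `(n,0)`, staying weakly above `y = n - x`. -/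
def IsDyckPath (n : ℕ) (t : List Bool) : Prop :=
  t.length = 2 * n ∧ t.count true = n ∧
  ∀ i, (t.take i).count false ≤ (t.take i).count true

/-- The height (distance above the diagonal) of the `i`-th vertex of the path `t`. -/
def pathHeight (t : List Bool) (i : ℕ) : ℤ :=
  ((t.take i).count true : ℤ) - ((t.take i).count false : ℤ)

/-- `s` lies weakly below `t` (for paths of the same semilength). -/
def WeaklyBelow (s t : List Bool) : Prop := ∀ i, pathHeight s i ≤ pathHeight t i

/-- The shape of a matching of `[2n]`: an east step for each opener, a south step for
each closer. -/
def shapeOf (n : ℕ) (M : Finset (ℕ × ℕ)) : List Bool :=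
  (List.range (2 * n)).map fun x => decide ((x + 1) ∈ M.image Prod.fst)

/-- Number of returns of a path: south steps ending on the diagonal. -/
def returnsOf (t : List Bool) : ℕ :=
  ((Finset.range t.length).filter fun i =>
    t[i]? = some false ∧ (t.take (i+1)).count true = (t.take (i+1)).count false).card

/-- Height sequence of a path, as natural numbers. -/
def hseq (t : List Bool) (i : ℕ) : ℕ := (t.take i).count true - (t.take i).count false

/-- `η(F)`: the number of indices `0 ≤ i ≤ 2n` with `h_i = 2`. -/
def etaOf (n : ℕ) (t : List Bool) : ℕ :=
  ((Finset.range (2 * n + 1)).filter fun i => hseq t i = 2).card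

/-! ### Full rook placements on Ferrers boards -/

/-- The square in column `c`, row `r` (both 1-indexed from the bottom left) belongs to the
Ferrers board with border path `t ∈ F_n`. -/
def InBoard (n : ℕ) (t : List Bool) (c r : ℕ) : Prop :=
  1 ≤ c ∧ 1 ≤ r ∧ ∃ i, c ≤ (t.take i).count true ∧ (t.take i).count false + r ≤ n

/-- `R` is a full rook placement on the Ferrers board with border path `t ∈ F_n`:
one rook in each of the `n` rows and `n` columns. -/
def IsFullRookPlacement (n : ℕ) (t : List Bool) (R : Finset (ℕ × ℕ)) : Prop :=
  (∀ p ∈ R, InBoard n t p.1 p.2) ∧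
  (∀ c, 1 ≤ c → c ≤ n → ∃! p, p ∈ R ∧ p.1 = c) ∧
  (∀ r, 1 ≤ r → r ≤ n → ∃! p, p ∈ R ∧ p.2 = r)

/-- The rooks of `R` lying in the rectangle `Γ(V_i)` determined by the `i`-th border vertex. -/
def rectRooks (n : ℕ) (t : List Bool) (R : Finset (ℕ × ℕ)) (i : ℕ) : Finset (ℕ × ℕ) :=
  R.filter fun p => p.1 ≤ (t.take i).count true ∧ p.2 + (t.take i).count false ≤ n

/-- Length of the longest increasing sequence (in both coordinates) in a finite point set. -/
def lisLen (S : Finset (ℕ × ℕ)) : ℕ :=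
  (S.powerset.filter fun T => ∀ p ∈ T, ∀ q ∈ T, p.1 < q.1 → p.2 < q.2).sup Finset.card

/-- The full rook placement `R` on the board with border `t ∈ F_n` contains the pattern `τ`:
some rectangle `Γ(V_i)` contains an occurrence of `τ`. -/
def PlacementContains {k : ℕ} (τ : Equiv.Perm (Fin k)) (n : ℕ) (t : List Bool)
    (R : Finset (ℕ × ℕ)) : Prop :=
  ∃ i ≤ 2 * n, ∃ f : Fin k → ℕ × ℕ,
    (∀ a, f a ∈ R ∧ (f a).1 ≤ (t.take i).count true ∧ (f a).2 + (t.take i).count false ≤ n) ∧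
    (∀ a b : Fin k, a < b → (f a).1 < (f b).1) ∧
    (∀ a b : Fin k, τ a < τ b → (f a).2 < (f b).2)

def PlacementAvoids {k : ℕ} (τ : Equiv.Perm (Fin k)) (n : ℕ) (t : List Bool)
    (R : Finset (ℕ × ℕ)) : Prop :=
  ¬ PlacementContains τ n t R

/-- `R` is board-minimal on the board with border `t`: every peak corner square holds a rook. -/
def BoardMinimal (n : ℕ) (t : List Bool) (R : Finset (ℕ × ℕ)) : Prop :=
  ∀ i, t[i]? = some true → t[i+1]? = some false →
    ((t.take (i+1)).count true, n - (t.take (i+1)).count false) ∈ R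

/-- Board-minimal full rook placements on boards of `F_n` avoiding the pattern `σ`,
recorded as pairs (border path, rook set). -/
def MinPlacements (n : ℕ) {k : ℕ} (σ : Equiv.Perm (Fin k)) :
    Set (List Bool × Finset (ℕ × ℕ)) :=
  {tR | IsDyckPath n tR.1 ∧ IsFullRookPlacement n tR.1 tR.2 ∧ BoardMinimal n tR.1 tR.2 ∧
        PlacementAvoids σ n tR.1 tR.2}

/-! ### Pattern avoidance in permutations -/

def PermContains {n k : ℕ} (τ : Equiv.Perm (Fin k)) (π : Equiv.Perm (Fin n)) : Prop :=
  ∃ f : Fin k → Fin n, StrictMono f ∧ ∀ a b : Fin k, τ a < τ b → π (f a) < π (f b)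

def PermAvoids {n k : ℕ} (τ : Equiv.Perm (Fin k)) (π : Equiv.Perm (Fin n)) : Prop :=
  ¬ PermContains τ π

/-- The full rook placement associated to a permutation of `[n]`. -/
def permPlacement {n : ℕ} (π : Equiv.Perm (Fin n)) : Finset (ℕ × ℕ) :=
  Finset.univ.image fun i : Fin n => ((i : ℕ) + 1, (π i : ℕ) + 1)

/-! ### Matchings with fixed points -/

/-- A (not necessarily perfect) matching on `{1, …, m}`: pairwise disjoint pairs. -/
def IsPartialMatching (m : ℕ) (M : Finset (ℕ × ℕ)) : Prop :=
  (∀ p ∈ M, p.1 < p.2 ∧ 1 ≤ p.1 ∧ p.2 ≤ m) ∧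
  ∀ p ∈ M, ∀ q ∈ M, p ≠ q → p.1 ≠ q.1 ∧ p.1 ≠ q.2 ∧ p.2 ≠ q.1 ∧ p.2 ≠ q.2

/-- The fixed points (unmatched vertices) of a matching on `{1, …, m}`. -/
def fixedPts (m : ℕ) (M : Finset (ℕ × ℕ)) : Finset ℕ :=
  (Finset.Icc 1 m).filter fun x => ∀ p ∈ M, p.1 ≠ x ∧ p.2 ≠ x

/-- The matched vertices of a matching on `{1, …, m}`. -/
def matchedSet (m : ℕ) (M : Finset (ℕ × ℕ)) : Finset ℕ :=
  (Finset.Icc 1 m).filter fun x => ∃ p ∈ M, p.1 = x ∨ p.2 = x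

/-- The rank (1-based) of `x` inside the finset `S`. -/
def rankIn (S : Finset ℕ) (x : ℕ) : ℕ := (S.filter (· ≤ x)).card

/-- The matching obtained by removing the fixed points and relabeling increasingly. -/
def relabeled (m : ℕ) (M : Finset (ℕ × ℕ)) : Finset (ℕ × ℕ) :=
  M.image fun p => (rankIn (matchedSet m M) p.1, rankIn (matchedSet m M) p.2)

/-! ### Set partitions -/

/-- `(i,j)` is an arc of the set partition `P` of `{1, …, n}`: `i < j` lie in a common block
with no element of that block strictly between them. -/
def PartArc {n : ℕ} (P : Finpartition (Finset.Icc 1 n)) (i j : ℕ) : Prop :=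
  i < j ∧ ∃ B ∈ P.parts, i ∈ B ∧ j ∈ B ∧ ∀ x ∈ B, ¬(i < x ∧ x < j)

/-- The set partition `P` contains the pattern `τ ∈ S_k`. -/
def PartContains {k n : ℕ} (τ : Equiv.Perm (Fin k)) (P : Finpartition (Finset.Icc 1 n)) : Prop :=
  ∃ f : Fin (2 * k) → ℕ, StrictMono f ∧
    ∀ a : Fin k,
      PartArc P (f ⟨a.1, by have := a.isLt; omega⟩)
        (f ⟨2 * k - 1 - (τ a).1, by have := (τ a).isLt; omega⟩)

def PartAvoids {k n : ℕ} (τ : Equiv.Perm (Fin k)) (P : Finpartition (Finset.Icc 1 n)) : Prop :=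
  ¬ PartContains τ P

/-! ### Counting functions -/

/-- `|M_n(τ)|`: the number of `τ`-avoiding perfect matchings of `[2n]`. -/
noncomputable def mcount {k : ℕ} (τ : Equiv.Perm (Fin k)) (n : ℕ) : ℕ :=
  {M : Finset (ℕ × ℕ) | IsPerfectMatching n M ∧ MatchAvoids τ M}.ncard

/-- `|M_n(σ,τ)|`: the number of perfect matchings of `[2n]` avoiding both `σ` and `τ`. -/
noncomputable def mcount2 {k : ℕ} (σ τ : Equiv.Perm (Fin k)) (n : ℕ) : ℕ :=
  {M : Finset (ℕ × ℕ) | IsPerfectMatching n M ∧ MatchAvoids σ M ∧ MatchAvoids τ M}.ncard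

/-- `|P_n(τ)|`: the number of `τ`-avoiding set partitions of `[n]`. -/
noncomputable def pcount {k : ℕ} (τ : Equiv.Perm (Fin k)) (n : ℕ) : ℕ :=
  Nat.card {P : Finpartition (Finset.Icc 1 n) // PartAvoids τ P}

/-- `|P_n(σ,τ)|`: the number of set partitions of `[n]` avoiding both `σ` and `τ`. -/
noncomputable def pcount2 {k : ℕ} (σ τ : Equiv.Perm (Fin k)) (n : ℕ) : ℕ :=
  Nat.card {P : Finpartition (Finset.Icc 1 n) // PartAvoids σ P ∧ PartAvoids τ P}

/-- `|S_n(τ)|`: the number of `τ`-avoiding permutations of `[n]`. -/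
noncomputable def scount {k : ℕ} (τ : Equiv.Perm (Fin k)) (n : ℕ) : ℕ :=
  Nat.card {π : Equiv.Perm (Fin n) // PermAvoids τ π}

/-- The generating function `S(z) = Σ_{n≥0} |S_n(1342)| zⁿ` over `ℚ`. -/
noncomputable def S1342 : PowerSeries ℚ := PowerSeries.mk fun n => (scount p1342 n : ℚ)



/-! ### Words -/
namespace W1342
open Finset

/-- list avoids 1342 -/
def Av (l : List ℤ) : Prop :=
  ∀ a b c d : ℤ, List.Sublist [a, c, d, b] l → a < b → b < c → c < d → False

noncomputable def perms (V : Finset ℤ) : Finset (List ℤ) := V.toList.permutations.toFinset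

lemma mem_perms {V : Finset ℤ} {w : List ℤ} :
    w ∈ perms V ↔ w.Nodup ∧ ∀ x, x ∈ w ↔ x ∈ V := by
  unfold perms
  rw [List.mem_toFinset, List.mem_permutations]
  constructor
  · intro h
    exact ⟨h.nodup_iff.mpr V.nodup_toList, fun x => by rw [h.mem_iff, Finset.mem_toList]⟩
  · rintro ⟨h1, h2⟩
    rw [List.perm_ext_iff_of_nodup h1 V.nodup_toList]
    intro x; rw [h2, Finset.mem_toList]

open Classical in
noncomputable def cnt (V : Finset ℤ) (P : List ℤ → Prop) : ℕ := ((perms V).filter P).card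

lemma map_perms {V V' : Finset ℤ} {f g : ℤ → ℤ} (hf : ∀ v ∈ V, f v ∈ V' ∧ g (f v) = v)
    (hg : ∀ v ∈ V', g v ∈ V ∧ f (g v) = v) {w : List ℤ} (hw : w ∈ perms V) :
    w.map f ∈ perms V' := by
  rw [mem_perms] at hw ⊢
  obtain ⟨h1, h2⟩ := hw
  refine ⟨?_, ?_⟩
  · refine List.Nodup.map_on ?_ h1
    intro x hx y hy hxy
    rw [← (hf x ((h2 x).1 hx)).2, hxy, (hf y ((h2 y).1 hy)).2]
  · intro x
    rw [List.mem_map]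
    constructor
    · rintro ⟨a, ha, rfl⟩; exact (hf a ((h2 a).1 ha)).1
    · intro hx; exact ⟨g x, (h2 _).2 (hg x hx).1, (hg x hx).2⟩

lemma map_map_perms {V V' : Finset ℤ} {f g : ℤ → ℤ} (hf : ∀ v ∈ V, f v ∈ V' ∧ g (f v) = v)
    {w : List ℤ} (hw : w ∈ perms V) : (w.map f).map g = w := by
  rw [List.map_map]
  conv_rhs => rw [← List.map_id w]
  apply List.map_congr_left
  intro a ha
  exact (hf a (((mem_perms.1 hw).2 a).1 ha)).2

lemma cnt_relabel {V V' : Finset ℤ} {P P' : List ℤ → Prop} (f g : ℤ → ℤ)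
    (hf : ∀ v ∈ V, f v ∈ V' ∧ g (f v) = v)
    (hg : ∀ v ∈ V', g v ∈ V ∧ f (g v) = v)
    (hP : ∀ w ∈ perms V, P w → P' (w.map f))
    (hP' : ∀ w ∈ perms V', P' w → P (w.map g)) : cnt V P = cnt V' P' := by
  classical
  unfold cnt
  refine Finset.card_nbij' (List.map f) (List.map g) ?_ ?_ ?_ ?_
  · intro w hw
    simp only [Finset.coe_filter, Set.mem_ofPred_eq] at hw ⊢
    exact ⟨map_perms hf hg hw.1, hP w hw.1 hw.2⟩
  · intro w hw
    simp only [Finset.coe_filter, Set.mem_ofPred_eq] at hw ⊢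
    exact ⟨map_perms hg hf hw.1, hP' w hw.1 hw.2⟩
  · intro w hw
    simp only [Finset.coe_filter, Set.mem_ofPred_eq] at hw
    exact map_map_perms hf hw.1
  · intro w hw
    simp only [Finset.coe_filter, Set.mem_ofPred_eq] at hw
    exact map_map_perms hg hw.1

lemma Av.map {l : List ℤ} {f : ℤ → ℤ} (h : Av l)
    (hf : ∀ x ∈ l, ∀ y ∈ l, f x < f y → x < y) : Av (l.map f) := by
  intro a b c d hs h1 h2 h3
  rw [List.sublist_map_iff] at hs
  obtain ⟨l', hl', he⟩ := hs
  match l', he with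
  | [a', c', d', b'], he =>
    simp only [List.map_cons, List.map_nil, List.cons.injEq, and_true] at he
    obtain ⟨rfl, rfl, rfl, rfl⟩ := he
    have ha : a' ∈ l := hl'.subset (by simp)
    have hb : b' ∈ l := hl'.subset (by simp)
    have hc : c' ∈ l := hl'.subset (by simp)
    have hd : d' ∈ l := hl'.subset (by simp)
    exact h a' b' c' d' hl' (hf _ ha _ hb h1) (hf _ hb _ hc h2) (hf _ hc _ hd h3)

lemma Av.sub {l l' : List ℤ} (h : Av l) (hs : List.Sublist l' l) : Av l' :=
  fun a b c d h' => h a b c d (h'.trans hs)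

noncomputable def VV (b m : ℕ) : Finset ℤ := (Finset.Icc (-(b : ℤ)) m).erase 0

lemma mem_VV {b m : ℕ} {x : ℤ} : x ∈ VV b m ↔ x ≠ 0 ∧ -(b : ℤ) ≤ x ∧ x ≤ m := by
  simp [VV]

def Good (p : ℕ) (w : List ℤ) : Prop :=
  Av (0 :: w) ∧ ∀ h v : ℤ, List.Sublist [h, v] w → (p : ℤ) < h → 0 < v → v ≤ p → False

def Cut (p : ℕ) (u s : List ℤ) : Prop := ∀ y ∈ (0 : ℤ) :: u, ∀ v ∈ s, v ≤ (p : ℤ) → v ≤ y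

def Irr (p : ℕ) (u : List ℤ) : Prop := ∀ u' s', u = u' ++ s' → s' ≠ [] → ¬ Cut p u' s'

noncomputable def aa (b m : ℕ) : ℕ := cnt (VV b m) (fun w => Av (0 :: w))
noncomputable def ww (b p q : ℕ) : ℕ := cnt (VV b (p + q)) (Good p)
noncomputable def tt (c p : ℕ) : ℕ := cnt (VV c p) (fun w => Av (0 :: w) ∧ Irr p w)

lemma ww_zero (b p : ℕ) : ww b p 0 = aa b p := by
  classical
  unfold ww aa cnt
  congr 1
  apply Finset.filter_congr
  intro w hw
  simp only [Good]
  constructor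
  · exact fun h => h.1
  · refine fun h => ⟨h, ?_⟩
    intro h v hs h1
    have := ((mem_perms.1 hw).2 h).1 (hs.subset (by simp))
    rw [mem_VV] at this
    push_cast at this
    omega

lemma exists_cut (p : ℕ) (w : List ℤ) : ∃ u s, w = u ++ s ∧ Cut p u s ∧
    ∀ u' s', u = u' ++ s' → s' ≠ [] → ¬ Cut p u' (s' ++ s) := by
  classical
  have hex : ∃ k, Cut p (w.take k) (w.drop k) := ⟨w.length, by simp [Cut]⟩
  refine ⟨w.take (Nat.find hex), w.drop (Nat.find hex), by simp, Nat.find_spec hex, ?_⟩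
  intro u' s' h hs hc
  have hlen : u'.length < Nat.find hex := by
    have := congrArg List.length h
    rw [List.length_append, List.length_take] at this
    have : 0 < s'.length := List.length_pos_iff.2 hs
    omega
  apply Nat.find_min hex hlen
  have hw : w = u' ++ (s' ++ w.drop (Nat.find hex)) := by
    rw [← List.append_assoc, ← h]; simp
  generalize w.drop (Nat.find hex) = s at hw hc
  subst hw
  simpa using hc

lemma cut_le {p : ℕ} {u s : List ℤ} (hg : Good p (u ++ s))
    (hmin : ∀ u' s', u = u' ++ s' → s' ≠ [] → ¬ Cut p u' (s' ++ s)) :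
    ∀ h ∈ u, h ≤ (p : ℤ) := by
  intro h hh
  by_contra hlt
  push Not at hlt
  obtain ⟨u1, u2, rfl⟩ := List.append_of_mem hh
  have key : ∀ u' u'', u1 = u' ++ u'' → ∀ y ∈ (0 : ℤ) :: u', ∀ v ∈ u2 ++ s, v ≤ (p : ℤ) → v ≤ y := by
    intro u'
    induction u' using List.reverseRecOn with
    | nil =>
      intro u'' he y hy v hv hvp
      simp only [List.mem_cons, List.not_mem_nil, or_false] at hy
      subst hy
      by_contra hv0
      push Not at hv0
      refine hg.2 h v ?_ hlt hv0 hvp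
      rw [List.append_assoc, List.cons_append]
      refine List.Sublist.trans ?_ (List.sublist_append_right _ _)
      exact List.Sublist.cons_cons _ (List.singleton_sublist.2 hv)
    | append_singleton u' z ih =>
      intro u'' he y hy v hv hvp
      have ih' := ih (z :: u'') (by simp [he])
      by_cases hy' : y ∈ (0 : ℤ) :: u'
      · exact ih' y hy' v hv hvp
      have hyz : y = z := by
        simp only [List.mem_cons, List.mem_append, List.not_mem_nil, or_false] at hy hy'
        tauto
      subst hyz
      by_contra hlt2
      push Not at hlt2
      have hn := hmin u' (y :: u'' ++ h :: u2) (by simp [he]) (by simp)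
      unfold Cut at hn
      push Not at hn
      obtain ⟨y', hy'1, v', hv', hv'p, hyv'⟩ := hn
      have h1 := ih' y' hy'1 v hv hvp
      have hv'' : v' ∈ u'' := by
        have h2 : v' ∉ u2 ++ s := fun hc => by
          have := ih' y' hy'1 v' hc hv'p
          omega
        have h3 : v' ≠ h := by omega
        have h4 : v' ≠ y := by omega
        simp only [List.mem_cons, List.mem_append] at hv' h2
        tauto
      refine hg.1 y v v' h ?_ hlt2 (by omega) (by omega)
      rw [he]
      have e : (0 : ℤ) :: (u' ++ [y] ++ u'' ++ h :: u2 ++ s) =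
        (0 :: u') ++ (y :: (u'' ++ (h :: (u2 ++ s)))) := by simp
      rw [e]
      refine List.Sublist.trans ?_ (List.sublist_append_right _ _)
      refine List.Sublist.cons_cons _ ?_
      change List.Sublist ([v'] ++ [h, v]) _
      refine List.Sublist.append (List.singleton_sublist.2 hv'') ?_
      exact List.Sublist.cons_cons _ (List.singleton_sublist.2 hv)
  apply hmin u1 (h :: u2) rfl (by simp)
  intro y hy v hv hvp
  have : v ∈ u2 ++ s := by
    simp only [List.cons_append, List.mem_cons] at hv
    rcases hv with rfl | hv
    · omega
    · exact hv
  exact key u1 [] (by simp) y hy v this hvp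

/-- gluing -/
lemma good_glue {p : ℕ} {u s : List ℤ} {m : ℤ} (hu : Av (0 :: u)) (hle : ∀ h ∈ u, h ≤ (p : ℤ))
    (hm : ∀ y ∈ (0 : ℤ) :: u, m ≤ y) (hcut : Cut p u s) (hs : Av (m :: s)) : Good p (u ++ s) := by
  have hle' : ∀ h ∈ (0 : ℤ) :: u, h ≤ (p : ℤ) := by
    intro h hh
    rcases List.mem_cons.1 hh with rfl | hh
    · positivity
    · exact hle h hh
  constructor
  · intro a b c d hsub h1 h2 h3
    rw [← List.cons_append, List.sublist_append_iff] at hsub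
    obtain ⟨l1, l2, he, hl1, hl2⟩ := hsub
    have hms : ∀ {l}, List.Sublist l s → List.Sublist l (m :: s) := fun h => h.cons _
    match l1, he with
    | [], he =>
      simp only [List.nil_append] at he
      subst he
      exact hs a b c d (hms hl2) h1 h2 h3
    | [x], he =>
      simp only [List.cons_append, List.nil_append, List.cons.injEq] at he
      obtain ⟨rfl, rfl⟩ := he
      have := hm a (hl1.subset (by simp))
      exact hs m b c d (hl2.cons_cons _) (by omega) h2 h3
    | [x, x2], he =>
      simp only [List.cons_append, List.nil_append, List.cons.injEq] at he
      obtain ⟨rfl, rfl, rfl⟩ := he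
      have := hle' c (hl1.subset (by simp))
      have := hcut a (hl1.subset (by simp)) b (hl2.subset (by simp)) (by omega)
      omega
    | [x, x2, x3], he =>
      simp only [List.cons_append, List.nil_append, List.cons.injEq] at he
      obtain ⟨rfl, rfl, rfl, rfl⟩ := he
      have := hle' c (hl1.subset (by simp))
      have := hcut a (hl1.subset (by simp)) b (hl2.subset (by simp)) (by omega)
      omega
    | [x, x2, x3, x4], he =>
      simp only [List.cons_append, List.nil_append, List.cons.injEq] at he
      obtain ⟨rfl, rfl, rfl, rfl, rfl⟩ := he
      exact hu a b c d hl1 h1 h2 h3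
    | x :: x2 :: x3 :: x4 :: x5 :: l, he => simp at he
  · intro h v hsub h1 h2 h3
    rw [List.sublist_append_iff] at hsub
    obtain ⟨l1, l2, he, hl1, hl2⟩ := hsub
    match l1, he with
    | [], he =>
      simp only [List.nil_append] at he
      subst he
      have := hcut 0 (by simp) v (hl2.subset (by simp)) (by omega)
      omega
    | x :: l, he =>
      simp only [List.cons_append, List.cons.injEq] at he
      obtain ⟨rfl, _⟩ := he
      have := hle h (hl1.subset (by simp))
      omega

end W1342

namespace W1342
open Finset

def gg (c p : ℕ) (v : ℤ) : ℤ := if v ≤ 0 then v - c else v + p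
def ff (c p : ℕ) (v : ℤ) : ℤ := if v ≤ 0 then v + c else v - p

lemma gg_lt (c p : ℕ) {x y : ℤ} (h : gg c p x < gg c p y) : x < y := by
  unfold gg at h; split_ifs at h <;> omega

lemma gg_inj (c p : ℕ) : Function.Injective (gg c p) := by
  intro x y h; unfold gg at h; split_ifs at h <;> omega

lemma ww_eq (b p q : ℕ) : ww b p q = ∑ c ∈ range (b + 1), tt c p * aa (b - c) q := by
  classical
  unfold ww tt aa cnt
  simp_rw [← Finset.card_product]
  rw [← Finset.card_sigma]
  symm
  refine Finset.card_bij (fun x _ => x.2.1 ++ x.2.2.map (gg x.1 p)) ?_ ?_ ?_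
  · rintro ⟨c, u, s⟩ h
    simp only [Finset.mem_sigma, Finset.mem_range, Finset.mem_product, Finset.mem_filter, mem_perms,
      mem_VV] at h ⊢
    obtain ⟨hc, ⟨⟨hu1, hu2⟩, hu3, hu4⟩, ⟨hs1, hs2⟩, hs3⟩ := h
    have hbc : ((b - c : ℕ) : ℤ) = b - c := by omega
    rw [hbc] at hs2
    have hmems : ∀ x, x ∈ s.map (gg c p) ↔ (-(b : ℤ) ≤ x ∧ x < -c) ∨ ((p : ℤ) < x ∧ x ≤ p + q) := by
      intro x
      rw [List.mem_map]
      constructor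
      · rintro ⟨y, hy, rfl⟩
        have := (hs2 y).1 hy
        unfold gg; split_ifs <;> omega
      · intro h
        refine ⟨ff c p x, (hs2 _).2 ?_, ?_⟩ <;> unfold ff
        · split_ifs <;> omega
        · unfold gg; split_ifs <;> omega
    have hcut : Cut p u (s.map (gg c p)) := by
      intro y hy v hv hvp
      have h1 := (hmems v).1 hv
      rcases List.mem_cons.1 hy with rfl | hy
      · omega
      · have := (hu2 y).1 hy
        omega
    refine ⟨⟨?_, ?_⟩, ?_⟩
    · rw [List.nodup_append]
      refine ⟨hu1, hs1.map (gg_inj c p), ?_⟩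
      intro x hx y hy
      have := (hmems y).1 hy
      have := (hu2 x).1 hx
      omega
    · intro x
      rw [List.mem_append, hu2, hmems]
      push_cast
      omega
    · refine good_glue (m := -c) hu3 ?_ ?_ hcut ?_
      · intro y hy
        exact ((hu2 y).1 hy).2.2
      · intro y hy
        rcases List.mem_cons.1 hy with rfl | hy
        · omega
        · exact ((hu2 y).1 hy).2.1
      · have : (-(c : ℤ)) :: s.map (gg c p) = (0 :: s).map (gg c p) := by simp [gg]
        rw [this]
        exact hs3.map (fun x _ y _ h => gg_lt c p h)
  · have key : ∀ (u r s t : List ℤ), u ++ s = (u ++ r) ++ t → Cut p u s → Irr p (u ++ r) → r = [] := by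
      intro u r s t h hc hi
      by_contra hr
      apply hi u r rfl hr
      rw [List.append_assoc] at h
      have := List.append_cancel_left h
      subst this
      exact fun y hy v hv => hc y hy v (List.mem_append_left _ hv)
    have hcut : ∀ (c : ℕ) (u s : List ℤ) , (u ∈ perms (VV c p)) → (s ∈ perms (VV (b-c) q)) →
        Cut p u (s.map (gg c p)) := by
      intro c u s hu hs y hy v hv hvp
      rw [mem_perms] at hu hs
      simp only [mem_VV] at hu hs
      rw [List.mem_map] at hv
      obtain ⟨v, hv, rfl⟩ := hv
      have h1 := (hs.2 v).1 hv
      unfold gg at hvp ⊢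
      rcases List.mem_cons.1 hy with rfl | hy
      · split_ifs at hvp ⊢ <;> omega
      · have := (hu.2 y).1 hy
        split_ifs at hvp ⊢ <;> omega
    rintro ⟨c, u, s⟩ h ⟨c', u', s'⟩ h' heq
    simp only [Finset.mem_sigma, Finset.mem_range, Finset.mem_product, Finset.mem_filter] at h h' heq
    have hC := hcut c u s h.2.1.1 h.2.2.1
    have hC' := hcut c' u' s' h'.2.1.1 h'.2.2.1
    have huu : u = u' := by
      have hq := heq
      rw [List.append_eq_append_iff] at hq
      rcases hq with ⟨r, hr, hr'⟩ | ⟨r, hr, hr'⟩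
      · subst hr
        have := key u r _ _ heq hC h'.2.1.2.2
        simp [this]
      · subst hr
        have := key u' r _ _ heq.symm hC' h.2.1.2.2
        simp [this]
    subst huu
    have hcc : c = c' := by
      have h1 := (mem_perms.1 h.2.1.1).2
      have h2 := (mem_perms.1 h'.2.1.1).2
      have e1 : ∀ x : ℤ, x ∈ VV c p ↔ x ∈ VV c' p := fun x => by rw [← h1, ← h2]
      simp only [mem_VV] at e1
      have h3 := e1 (-c)
      have h4 := e1 (-c')
      omega
    subst hcc
    have := List.append_cancel_left heq
    have := List.map_injective_iff.2 (gg_inj c p) this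
    subst this
    rfl
  · intro w hw
    rw [Finset.mem_filter, mem_perms] at hw
    simp only [mem_VV] at hw
    obtain ⟨⟨hw1, hw2⟩, hg⟩ := hw
    obtain ⟨u, s, rfl, hcut, hmin⟩ := exists_cut p w
    have hle := cut_le hg hmin
    obtain ⟨m0, hm0, hm0'⟩ := Finset.exists_min_image ((0 : ℤ) :: u).toFinset id ⟨0, by simp⟩
    simp only [List.mem_toFinset, id] at hm0 hm0'
    obtain ⟨c, rfl⟩ : ∃ c : ℕ, m0 = -c := ⟨(-m0).toNat, by have := hm0' 0 (by simp); omega⟩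
    have hcb : c ≤ b := by
      rcases List.mem_cons.1 hm0 with h | h
      · omega
      · have := (hw2 (-c)).1 (by simp [h])
        omega
    have hbc : ((b - c : ℕ) : ℤ) = b - c := by omega
    push_cast at hw2
    rw [List.nodup_append] at hw1
    obtain ⟨hu1, hs1, hdis⟩ := hw1
    have hmemu : ∀ x, x ∈ u ↔ x ≠ 0 ∧ -(c : ℤ) ≤ x ∧ x ≤ p := by
      intro x
      constructor
      · intro hx
        have h1 := (hw2 x).1 (by simp [hx])
        have h2 := hle x hx
        have h3 := hm0' x (by simp [hx])
        omega
      · rintro ⟨h1, h2, h3⟩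
        have h4 := (hw2 x).2 (by omega)
        rcases List.mem_append.1 h4 with h | h
        · exact h
        · have h5 := hcut _ hm0 x h h3
          have h6 : x = -c := by omega
          rcases List.mem_cons.1 hm0 with h7 | h7
          · omega
          · rw [h6]; exact h7
    have hmems : ∀ x, x ∈ s ↔ (-(b : ℤ) ≤ x ∧ x < -c) ∨ ((p : ℤ) < x ∧ x ≤ p + q) := by
      intro x
      have h1 := hw2 x
      rw [List.mem_append] at h1
      have h2 := hmemu x
      constructor
      · intro hx
        have h3 := h1.1 (Or.inr hx)
        have : x ∉ u := fun h => hdis x h x hx rfl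
        have h4 := mt h2.2 this
        omega
      · intro hx
        rcases h1.2 (by omega) with h | h
        · have := h2.1 h
          omega
        · exact h
    have hfg : ∀ x ∈ s, gg c p (ff c p x) = x := by
      intro x hx
      have := (hmems x).1 hx
      unfold gg ff; split_ifs <;> omega
    refine ⟨⟨c, u, s.map (ff c p)⟩, ?_, ?_⟩
    · simp only [Finset.mem_sigma, Finset.mem_range, Finset.mem_product, Finset.mem_filter, mem_perms,
        mem_VV]
      refine ⟨by omega, ⟨⟨hu1, hmemu⟩, ?_, ?_⟩, ⟨?_, ?_⟩, ?_⟩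
      · exact hg.1.sub ((List.sublist_append_left u s).cons_cons 0)
      · intro u' s' he hs' hC
        apply hmin u' s' he hs'
        intro y hy v hv hvp
        rcases List.mem_append.1 hv with h | h
        · exact hC y hy v h hvp
        · refine hcut y ?_ v h hvp
          rw [he]
          rcases List.mem_cons.1 hy with h | h <;> simp [h]
      · refine List.Nodup.map_on ?_ hs1
        intro x hx y hy h
        rw [← hfg x hx, h, hfg y hy]
      · intro x
        rw [List.mem_map, hbc]
        constructor
        · rintro ⟨y, hy, rfl⟩
          have := (hmems y).1 hy
          unfold ff; split_ifs <;> omega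
        · intro h
          refine ⟨gg c p x, (hmems _).2 ?_, ?_⟩ <;> unfold gg
          · split_ifs <;> omega
          · unfold ff; split_ifs <;> omega
      · have : (0 : ℤ) :: s.map (ff c p) = ((-(c : ℤ)) :: s).map (ff c p) := by simp [ff]
        rw [this]
        refine Av.map (hg.1.sub ?_) ?_
        · change List.Sublist ([-(c:ℤ)] ++ s) ((0 :: u) ++ s)
          exact List.Sublist.append (List.singleton_sublist.2 hm0) (List.Sublist.refl s)
        · intro x hx y hy h
          have h1 : x = -c ∨ (-(b : ℤ) ≤ x ∧ x < -c) ∨ ((p : ℤ) < x ∧ x ≤ p + q) := by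
            rcases List.mem_cons.1 hx with h | h
            · exact Or.inl h
            · exact Or.inr ((hmems x).1 h)
          have h2 : y = -c ∨ (-(b : ℤ) ≤ y ∧ y < -c) ∨ ((p : ℤ) < y ∧ y ≤ p + q) := by
            rcases List.mem_cons.1 hy with h | h
            · exact Or.inl h
            · exact Or.inr ((hmems y).1 h)
          unfold ff at h
          split_ifs at h <;> omega
    · simp only [List.map_map]
      congr 1
      conv_rhs => rw [← List.map_id s]
      exact List.map_congr_left hfg

end W1342

namespace W1342
open Finset

lemma cnt_first (V : Finset ℤ) (hV : V.Nonempty) (P : List ℤ → Prop) :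
    cnt V P = ∑ x ∈ V, cnt (V.erase x) (fun w => P (x :: w)) := by
  classical
  unfold cnt
  rw [← Finset.card_sigma]
  symm
  refine Finset.card_bij (fun x _ => x.1 :: x.2) ?_ ?_ ?_
  · rintro ⟨x, w⟩ h
    simp only [Finset.mem_sigma, Finset.mem_filter, mem_perms, Finset.mem_erase] at h ⊢
    obtain ⟨hx, ⟨h1, h2⟩, h3⟩ := h
    refine ⟨⟨?_, ?_⟩, h3⟩
    · rw [List.nodup_cons]
      exact ⟨fun h => ((h2 x).1 h).1 rfl, h1⟩
    · intro y
      rw [List.mem_cons, h2]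
      by_cases hy : y = x
      · subst hy; simp [hx]
      · simp [hy]
  · rintro ⟨x, w⟩ _ ⟨x', w'⟩ _ h
    simp only [List.cons.injEq] at h
    obtain ⟨rfl, rfl⟩ := h
    rfl
  · intro w hw
    rw [Finset.mem_filter, mem_perms] at hw
    obtain ⟨⟨h1, h2⟩, h3⟩ := hw
    match w, h1, h2, h3 with
    | [], h1, h2, h3 =>
      obtain ⟨x, hx⟩ := hV
      have := (h2 x).2 hx
      simp at this
    | x :: w, h1, h2, h3 =>
      refine ⟨⟨x, w⟩, ?_, rfl⟩
      simp only [Finset.mem_sigma, Finset.mem_filter, mem_perms, Finset.mem_erase]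
      rw [List.nodup_cons] at h1
      refine ⟨(h2 x).1 (by simp), ⟨h1.2, ?_⟩, h3⟩
      intro y
      rw [← h2, List.mem_cons]
      constructor
      · intro hy
        refine ⟨?_, Or.inr hy⟩
        rintro rfl
        exact h1.1 hy
      · rintro ⟨h, h' | h'⟩
        · exact absurd h' h
        · exact h'

lemma sum_VV (b m : ℕ) (F : ℤ → ℕ) : ∑ x ∈ VV b m, F x =
    ∑ i ∈ range b, F ((i : ℤ) - b) + ∑ j ∈ range m, F ((j : ℤ) + 1) := by
  classical
  have hV : VV b m = (range b).image (fun i : ℕ => (i : ℤ) - b) ∪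
      (range m).image (fun i : ℕ => (i : ℤ) + 1) := by
    ext x
    simp only [mem_VV, Finset.mem_union, Finset.mem_image, Finset.mem_range]
    constructor
    · rintro ⟨h1, h2, h3⟩
      by_cases h : x < 0
      · exact Or.inl ⟨(x + b).toNat, by omega, by omega⟩
      · exact Or.inr ⟨(x - 1).toNat, by omega, by omega⟩
    · rintro (⟨i, h, rfl⟩ | ⟨i, h, rfl⟩) <;> omega
  rw [hV, Finset.sum_union, Finset.sum_image, Finset.sum_image]
  · intro x _ y _ h; simpa using h
  · intro x _ y _ h; simpa using h
  · rw [Finset.disjoint_left]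
    intro x h1 h2
    simp only [Finset.mem_image, Finset.mem_range] at h1 h2
    obtain ⟨i, h, rfl⟩ := h1
    obtain ⟨j, h', h''⟩ := h2
    omega

lemma av_low {x : ℤ} {w : List ℤ} (hx : x < 0) : Av (0 :: x :: w) ↔ Av (x :: w) := by
  constructor
  · exact fun h => h.sub (List.sublist_cons_self _ _)
  · intro h a b c d hs h1 h2 h3
    rw [List.sublist_cons_iff] at hs
    rcases hs with hs | ⟨r, hr, hs⟩
    · exact h a b c d hs h1 h2 h3
    · simp only [List.cons.injEq] at hr
      obtain ⟨rfl, rfl⟩ := hr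
      rw [List.sublist_cons_iff] at hs
      rcases hs with hs | ⟨r, hr, hs⟩
      · exact h x b c d (hs.cons_cons _) (by omega) h2 h3
      · simp only [List.cons.injEq] at hr
        omega

lemma av_high {x : ℤ} {w : List ℤ} (hx : 0 < x) : Av (0 :: x :: w) ↔
    Av (0 :: w) ∧ ∀ h v : ℤ, List.Sublist [h, v] w → x < h → 0 < v → v < x → False := by
  constructor
  · intro h
    refine ⟨h.sub ((List.sublist_cons_self _ _).cons_cons _), ?_⟩
    intro c v hs h1 h2 h3
    exact h 0 v x c ((hs.cons_cons _).cons_cons _) h2 h3 h1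
  · rintro ⟨h, h'⟩ a b c d hs h1 h2 h3
    rw [List.sublist_cons_iff] at hs
    rcases hs with hs | ⟨r, hr, hs⟩
    · rw [List.sublist_cons_iff] at hs
      rcases hs with hs | ⟨r, hr, hs⟩
      · exact h a b c d (hs.cons _) h1 h2 h3
      · simp only [List.cons.injEq] at hr
        obtain ⟨rfl, rfl⟩ := hr
        exact h 0 b c d (hs.cons_cons _) (by omega) h2 h3
    · simp only [List.cons.injEq] at hr
      obtain ⟨rfl, rfl⟩ := hr
      rw [List.sublist_cons_iff] at hs
      rcases hs with hs | ⟨r, hr, hs⟩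
      · exact h 0 b c d (hs.cons_cons _) h1 h2 h3
      · simp only [List.cons.injEq] at hr
        obtain ⟨rfl, rfl⟩ := hr
        exact h' d b hs h3 h1 h2

lemma first_low (b m i : ℕ) (hi : i < b) :
    cnt ((VV b m).erase ((i : ℤ) - b)) (fun w => Av (0 :: ((i : ℤ) - b) :: w)) =
      aa i (m + b - 1 - i) := by
  unfold aa
  have hx : (i : ℤ) - b < 0 := by omega
  have hc : ((m + b - 1 - i : ℕ) : ℤ) = m + b - 1 - i := by omega
  refine cnt_relabel (fun v => if v < 0 then v - (i - b) else v - (i - b) - 1)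
    (fun v => if v < b - i then v + (i - b) else v + (i - b) + 1) ?_ ?_ ?_ ?_
  · intro v hv
    rw [Finset.mem_erase, mem_VV] at hv
    rw [mem_VV, hc]
    refine ⟨?_, ?_⟩ <;> split_ifs <;> omega
  · intro v hv
    rw [mem_VV, hc] at hv
    rw [Finset.mem_erase, mem_VV]
    refine ⟨?_, ?_⟩ <;> split_ifs <;> omega
  · intro w hw h
    rw [av_low hx] at h
    have e : (0 : ℤ) :: w.map (fun v => if v < 0 then v - ((i : ℤ) - b) else v - (i - b) - 1) =
      (((i : ℤ) - b) :: w).map (fun v => if v < 0 then v - ((i : ℤ) - b) else v - (i - b) - 1) := by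
      simp [hi]
    rw [e]
    refine h.map ?_
    have h0 : ∀ x ∈ ((i : ℤ) - b) :: w, x ≠ 0 := by
      intro x hx'
      rcases List.mem_cons.1 hx' with rfl | hx'
      · omega
      · have := ((mem_perms.1 hw).2 x).1 hx'
        rw [Finset.mem_erase, mem_VV] at this
        exact this.2.1
    intro x hx y hy h
    have := h0 x hx
    have := h0 y hy
    split_ifs at h <;> omega
  · intro w hw h
    rw [av_low hx]
    have e : ((i : ℤ) - b) :: w.map (fun v => if v < (b : ℤ) - i then v + ((i : ℤ) - b) else v + (i - b) + 1) =
      ((0 : ℤ) :: w).map (fun v => if v < (b : ℤ) - i then v + ((i : ℤ) - b) else v + (i - b) + 1) := by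
      simp [hi]
    rw [e]
    refine h.map ?_
    intro x hx y hy h
    split_ifs at h <;> omega

lemma first_high (b m j : ℕ) (hj : j < m) :
    cnt ((VV b m).erase ((j : ℤ) + 1)) (fun w => Av (0 :: ((j : ℤ) + 1) :: w)) =
      ww b j (m - 1 - j) := by
  unfold ww
  have hx : (0 : ℤ) < j + 1 := by omega
  have hc : ((j + (m - 1 - j) : ℕ) : ℤ) = m - 1 := by omega
  have hsub : ∀ {w : List ℤ} {f : ℤ → ℤ} {h v : ℤ}, List.Sublist [h, v] (w.map f) →
      ∃ h' v', List.Sublist [h', v'] w ∧ f h' = h ∧ f v' = v := by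
    intro w f h v hs
    rw [List.sublist_map_iff] at hs
    obtain ⟨l', hl', he⟩ := hs
    match l', he with
    | [a', b'], he =>
      simp only [List.map_cons, List.map_nil, List.cons.injEq, and_true] at he
      exact ⟨a', b', hl', he.1.symm, he.2.symm⟩
  refine cnt_relabel (fun v => if v ≤ j then v else v - 1)
    (fun v => if v ≤ j then v else v + 1) ?_ ?_ ?_ ?_
  · intro v hv
    rw [Finset.mem_erase, mem_VV] at hv
    rw [mem_VV, hc]
    refine ⟨?_, ?_⟩ <;> split_ifs <;> omega
  · intro v hv
    rw [mem_VV, hc] at hv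
    rw [Finset.mem_erase, mem_VV]
    refine ⟨?_, ?_⟩ <;> split_ifs <;> omega
  · intro w hw h
    rw [av_high hx] at h
    have h0 : ∀ x ∈ (0 : ℤ) :: w, x ≠ j + 1 := by
      intro x hx'
      rcases List.mem_cons.1 hx' with rfl | hx'
      · omega
      · have := ((mem_perms.1 hw).2 x).1 hx'
        rw [Finset.mem_erase, mem_VV] at this
        exact this.1
    refine ⟨?_, ?_⟩
    · have e : (0 : ℤ) :: w.map (fun v => if v ≤ (j : ℤ) then v else v - 1) =
        ((0 : ℤ) :: w).map (fun v => if v ≤ (j : ℤ) then v else v - 1) := by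
        simp
      rw [e]
      refine h.1.map ?_
      intro x hx y hy h
      have := h0 x hx
      have := h0 y hy
      split_ifs at h <;> omega
    · intro a v hs h1 h2 h3
      obtain ⟨a', v', hs', rfl, rfl⟩ := hsub hs
      have := h0 a' (List.mem_cons_of_mem _ (hs'.subset (by simp)))
      have := h0 v' (List.mem_cons_of_mem _ (hs'.subset (by simp)))
      refine h.2 a' v' hs' ?_ ?_ ?_
      · split_ifs at h1 <;> omega
      · split_ifs at h2 <;> omega
      · split_ifs at h3 <;> omega
  · intro w hw h
    rw [av_high hx]
    refine ⟨?_, ?_⟩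
    · have e : (0 : ℤ) :: w.map (fun v => if v ≤ (j : ℤ) then v else v + 1) =
        ((0 : ℤ) :: w).map (fun v => if v ≤ (j : ℤ) then v else v + 1) := by
        simp
      rw [e]
      refine h.1.map ?_
      intro x hx y hy h
      split_ifs at h <;> omega
    · intro a v hs h1 h2 h3
      obtain ⟨a', v', hs', rfl, rfl⟩ := hsub hs
      refine h.2 a' v' hs' ?_ ?_ ?_
      · split_ifs at h1 <;> omega
      · split_ifs at h2 <;> omega
      · split_ifs at h3 <;> omega

noncomputable def ee (b m : ℕ) : ℕ := ∑ i ∈ range b, aa i (m + b - 1 - i)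

lemma ee_zero (m : ℕ) : ee 0 m = 0 := by simp [ee]

lemma ee_succ (b m : ℕ) : ee (b + 1) m = aa b m + ee b (m + 1) := by
  unfold ee
  rw [Finset.sum_range_succ, add_comm]
  congr 1
  · congr 1; omega
  · apply Finset.sum_congr rfl
    intro i hi
    congr 1
    omega

lemma aa_zero_zero : aa 0 0 = 1 := by
  classical
  unfold aa cnt
  rw [Finset.card_eq_one]
  refine ⟨[], ?_⟩
  ext w
  rw [Finset.mem_filter, mem_perms, Finset.mem_singleton]
  constructor
  · rintro ⟨⟨_, h⟩, _⟩
    rw [List.eq_nil_iff_forall_not_mem]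
    intro x hx
    have := (h x).1 hx
    rw [mem_VV] at this
    push_cast at this
    omega
  · rintro rfl
    refine ⟨⟨List.nodup_nil, ?_⟩, ?_⟩
    · intro x
      rw [mem_VV]
      simp
      intros
      omega
    · intro a b c d hs
      have := hs.length_le
      simp at this

lemma aa_rec (b m : ℕ) (h : b + m ≠ 0) :
    aa b m = ee b m + ∑ j ∈ range m, ww b j (m - 1 - j) := by
  have hne : (VV b m).Nonempty := by
    by_cases hb : b = 0
    · exact ⟨1, by rw [mem_VV]; omega⟩
    · exact ⟨-1, by rw [mem_VV]; omega⟩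
  rw [aa, cnt_first _ hne, sum_VV]
  unfold ee
  congr 1
  · exact Finset.sum_congr rfl fun i hi => first_low b m i (Finset.mem_range.1 hi)
  · exact Finset.sum_congr rfl fun i hi => first_high b m i (Finset.mem_range.1 hi)

end W1342

namespace W1342
open Finset

def wd {n : ℕ} (π : Equiv.Perm (Fin n)) : List ℤ := List.ofFn (fun i => ((π i : ℕ) : ℤ) - n)

lemma wd_get {n : ℕ} (π : Equiv.Perm (Fin n)) (i : ℕ) (h : i < (wd π).length) :
    (wd π)[i] = ((π ⟨i, by simpa [wd] using h⟩ : ℕ) : ℤ) - n := by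
  simp [wd]

lemma contains_iff {n : ℕ} (π : Equiv.Perm (Fin n)) :
    PermContains p1342 π ↔ ¬ Av (wd π) := by
  have hlen : (wd π).length = n := by simp [wd]
  constructor
  · rintro ⟨f, hf, h⟩ hav
    refine hav ((π (f 0) : ℕ) - n : ℤ) ((π (f 3) : ℕ) - n : ℤ) ((π (f 1) : ℕ) - n : ℤ)
      ((π (f 2) : ℕ) - n : ℤ) ?_ ?_ ?_ ?_
    · rw [List.sublist_iff_exists_fin_orderEmbedding_get_eq]
      refine ⟨OrderEmbedding.ofStrictMono (fun i => Fin.cast hlen.symm (f i)) ?_, ?_⟩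
      · intro a b hab
        exact hf hab
      · intro ix
        simp only [List.get_eq_getElem, wd_get]
        fin_cases ix <;> rfl
    · have := h 0 3 (by decide)
      have : (π (f 0) : ℕ) < π (f 3) := this
      omega
    · have := h 3 1 (by decide)
      have : (π (f 3) : ℕ) < π (f 1) := this
      omega
    · have := h 1 2 (by decide)
      have : (π (f 1) : ℕ) < π (f 2) := this
      omega
  · intro h
    unfold Av at h
    push Not at h
    obtain ⟨a, b, c, d, hs, h1, h2, h3, -⟩ := h
    rw [List.sublist_iff_exists_fin_orderEmbedding_get_eq] at hs
    obtain ⟨f, hf⟩ := hs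
    refine ⟨fun i => Fin.cast hlen (f i), ?_, ?_⟩
    · intro a b hab
      exact f.strictMono hab
    · have e0 := hf ⟨0, by simp⟩
      have e1 := hf ⟨1, by simp⟩
      have e2 := hf ⟨2, by simp⟩
      have e3 := hf ⟨3, by simp⟩
      simp only [List.get_eq_getElem, wd_get] at e0 e1 e2 e3
      have g0 : a = ((π (Fin.cast hlen (f (0 : Fin 4))) : ℕ) : ℤ) - n := e0
      have g1 : c = ((π (Fin.cast hlen (f (1 : Fin 4))) : ℕ) : ℤ) - n := e1
      have g2 : d = ((π (Fin.cast hlen (f (2 : Fin 4))) : ℕ) : ℤ) - n := e2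
      have g3 : b = ((π (Fin.cast hlen (f (3 : Fin 4))) : ℕ) : ℤ) - n := e3
      have k03 : (π (Fin.cast hlen (f (0 : Fin 4))))  < (π (Fin.cast hlen (f (3 : Fin 4)))) := by
        rw [Fin.lt_def]; omega
      have k31 : (π (Fin.cast hlen (f (3 : Fin 4))))  < (π (Fin.cast hlen (f (1 : Fin 4)))) := by
        rw [Fin.lt_def]; omega
      have k12 : (π (Fin.cast hlen (f (1 : Fin 4))))  < (π (Fin.cast hlen (f (2 : Fin 4)))) := by
        rw [Fin.lt_def]; omega
      intro x y hxy
      fin_cases x <;> fin_cases y <;>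
        first
        | (exfalso; revert hxy; decide)
        | exact k03
        | exact k31
        | exact k12
        | exact k03.trans k31
        | exact k31.trans k12
        | exact k03.trans (k31.trans k12)

lemma av_zero_cons {w : List ℤ} (h : ∀ x ∈ w, x < 0) : Av (0 :: w) ↔ Av w := by
  constructor
  · exact fun h => h.sub (List.sublist_cons_self _ _)
  · intro hw a b c d hs h1 h2 h3
    rw [List.sublist_cons_iff] at hs
    rcases hs with hs | ⟨r, hr, hs⟩
    · exact hw a b c d hs h1 h2 h3
    · simp only [List.cons.injEq] at hr
      obtain ⟨rfl, rfl⟩ := hr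
      have := h b (hs.subset (by simp))
      omega

lemma wd_mem {n : ℕ} (π : Equiv.Perm (Fin n)) : wd π ∈ perms (VV n 0) := by
  rw [mem_perms]
  constructor
  · unfold wd
    rw [List.nodup_ofFn]
    intro i j h
    have : (π i : ℕ) = π j := by simp only at h; omega
    exact π.injective (Fin.ext this)
  · intro x
    unfold wd
    rw [List.mem_ofFn, mem_VV]
    constructor
    · rintro ⟨i, rfl⟩
      have := (π i).2
      push_cast
      omega
    · rintro ⟨h1, h2, h3⟩
      push_cast at h3
      refine ⟨π.symm ⟨(x + n).toNat, by omega⟩, ?_⟩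
      simp only [Equiv.apply_symm_apply]
      omega

lemma wd_surj {n : ℕ} {w : List ℤ} (hw : w ∈ perms (VV n 0)) : ∃ π : Equiv.Perm (Fin n), wd π = w := by
  have hw' := hw
  rw [mem_perms] at hw
  simp only [mem_VV] at hw
  obtain ⟨h1, h2⟩ := hw
  have hlen : w.length = n := by
    have e : w.toFinset = VV n 0 := by
      ext x; rw [List.mem_toFinset, h2, mem_VV]
    have := congrArg Finset.card e
    rw [List.toFinset_card_of_nodup h1] at this
    rw [this]
    unfold VV
    rw [Finset.card_erase_of_mem (by simp), Int.card_Icc]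
    push_cast
    omega
  have hb : ∀ i : Fin n, w[i.1]'(by omega) ≠ 0 ∧ -(n : ℤ) ≤ w[i.1]'(by omega) ∧
      w[i.1]'(by omega) ≤ 0 := by
    intro i
    have := (h2 (w[i.1]'(by omega))).1 (List.getElem_mem _)
    simpa using this
  let F : Fin n → Fin n := fun i => ⟨((w[i.1]'(by omega)) + n).toNat, by have := hb i; omega⟩
  have hF : Function.Injective F := by
    intro i j h
    have h' : ((w[i.1]'(by omega)) + n).toNat = ((w[j.1]'(by omega)) + n).toNat := congrArg Fin.val h
    have hi := hb i
    have hj := hb j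
    have : w[i.1]'(by omega) = w[j.1]'(by omega) := by omega
    exact Fin.ext ((List.Nodup.getElem_inj_iff h1).1 this)
  refine ⟨Equiv.ofBijective F (Finite.injective_iff_bijective.1 hF), ?_⟩
  apply List.ext_getElem
  · simp [wd, hlen]
  · intro i hi hi'
    rw [wd_get]
    have h3 := hb ⟨i, by omega⟩
    simp only [Equiv.ofBijective_apply, F] at h3 ⊢
    omega

lemma wd_inj {n : ℕ} : Function.Injective (wd (n := n)) := by
  intro π σ h
  unfold wd at h
  rw [List.ofFn_inj] at h
  ext i
  have := congrFun h i
  omega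

lemma scount_eq (n : ℕ) : scount p1342 n = aa n 0 := by
  classical
  unfold scount aa cnt
  rw [Nat.card_eq_fintype_card, Fintype.card_subtype]
  refine Finset.card_bij (fun π _ => wd π) ?_ ?_ ?_
  · intro π h
    rw [Finset.mem_filter] at h ⊢
    refine ⟨wd_mem π, ?_⟩
    rw [av_zero_cons]
    · have := h.2
      unfold PermAvoids at this
      rw [contains_iff, not_not] at this
      exact this
    · intro x hx
      have := ((mem_perms.1 (wd_mem π)).2 x).1 hx
      rw [mem_VV] at this
      push_cast at this
      omega
  · intro π _ σ _ h
    exact wd_inj h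
  · intro w hw
    rw [Finset.mem_filter] at hw
    obtain ⟨π, rfl⟩ := wd_surj hw.1
    refine ⟨π, ?_, rfl⟩
    simp only [Finset.mem_filter, Finset.mem_univ, true_and]
    unfold PermAvoids
    rw [contains_iff, not_not]
    exact hw.2.sub (List.sublist_cons_self _ _)

end W1342

namespace W1342
open PowerSeries

abbrev R := PowerSeries ℚ

instance : IsAdicComplete (IsLocalRing.maximalIdeal R) R := by
  have : IsLocalRing.maximalIdeal R = Ideal.span {X} := PowerSeries.maximalIdeal_eq_span_X
  rw [this]
  infer_instance

lemma double_root (D : PowerSeries R) (Δ : Polynomial R) (h : (Δ : PowerSeries R) = D * D)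
    (h0 : coeff 0 D ∈ IsLocalRing.maximalIdeal R) (h1 : coeff 1 D ∉ IsLocalRing.maximalIdeal R) :
    ∃ (Y : R) (q : Polynomial R), Δ = (Polynomial.X - Polynomial.C Y) ^ 2 * q := by
  have hord : (D.map (IsLocalRing.residue R)).order = 1 := by
    rw [show (1 : ℕ∞) = ((1 : ℕ) : ℕ∞) from rfl, PowerSeries.order_eq_nat]
    constructor
    · rw [coeff_map]
      intro h
      exact h1 ((IsLocalRing.residue_eq_zero_iff _).1 h)
    · intro i hi
      obtain rfl : i = 0 := by omega
      rw [coeff_map]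
      exact (IsLocalRing.residue_eq_zero_iff _).2 h0
  have hD : D.map (IsLocalRing.residue R) ≠ 0 := by
    intro h; rw [h] at hord; simp at hord
  obtain ⟨f, g, H⟩ := exists_isWeierstrassFactorization hD
  have hdeg : f.natDegree = 1 := by
    rw [H.natDegree_eq_toNat_order_map, hord]; rfl
  have hmonic : f.Monic := H.isDistinguishedAt.monic
  have hf : f = Polynomial.X - Polynomial.C (-(f.coeff 0)) := by
    have := hmonic.eq_X_add_C hdeg
    rw [Polynomial.C_neg, sub_neg_eq_add]
    exact this
  have H2 : (D * D).IsWeierstrassFactorization (f * f) (g * g) := H.mul H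
  obtain ⟨k, hk⟩ := H2.isUnit.exists_right_inv
  have hmon2 : (f * f).Monic := hmonic.mul hmonic
  have d1 : (Δ : PowerSeries R).IsWeierstrassDivision (D * D) 1 0 := by
    refine ⟨?_, ?_⟩
    · rw [Polynomial.degree_zero]; exact WithBot.bot_lt_coe _
    · rw [h]; simp
  have d2 : (Δ : PowerSeries R).IsWeierstrassDivision (D * D) (k * ((Δ /ₘ (f * f) : Polynomial R) : PowerSeries R))
      (Δ %ₘ (f * f)) := by
    refine ⟨?_, ?_⟩
    · have e := H2.natDegree_eq_toNat_order_map
      change _ < (((D * D).map (IsLocalRing.residue R)).order.toNat : WithBot ℕ)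
      rw [← e, ← Polynomial.degree_eq_natDegree hmon2.ne_zero]
      exact Polynomial.degree_modByMonic_lt _ hmon2
    · have e := congrArg (fun p : Polynomial R => (p : PowerSeries R)) (Polynomial.modByMonic_add_div Δ (f * f))
      simp only [Polynomial.coe_add, Polynomial.coe_mul] at e
      rw [H2.eq_mul, Polynomial.coe_mul, ← e]
      linear_combination (-(f : PowerSeries R) * f * ((Δ /ₘ (f * f) : Polynomial R) : PowerSeries R)) * hk
  have := (IsWeierstrassDivision.elim H2.map_ne_zero d1 d2).2
  refine ⟨-(f.coeff 0), Δ /ₘ (f * f), ?_⟩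
  rw [← hf, pow_two]
  have e := Polynomial.modByMonic_add_div Δ (f * f)
  rw [← this, zero_add] at e
  exact e.symm

noncomputable def Ac (m : ℕ) : R := mk fun b => (aa b m : ℚ)
noncomputable def Ec (m : ℕ) : R := mk fun b => (ee b m : ℚ)
noncomputable def Tc (m : ℕ) : R := mk fun b => (tt b m : ℚ)
noncomputable def Wc (p q : ℕ) : R := mk fun b => (ww b p q : ℚ)

lemma Wc_eq (p q : ℕ) : Wc p q = Tc p * Ac q := by
  ext b
  rw [coeff_mul, Finset.Nat.sum_antidiagonal_eq_sum_range_succ_mk]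
  simp only [Wc, Tc, Ac, coeff_mk, ww_eq]
  push_cast
  rfl

lemma Ac_eq (p : ℕ) : Ac p = Tc p * Ac 0 := by
  rw [← Wc_eq]
  ext b
  simp [Ac, Wc, ww_zero]

lemma Ec_eq (m : ℕ) : Ec m = X * (Ac m + Ec (m + 1)) := by
  ext b
  cases b with
  | zero => simp [Ec, ee_zero]
  | succ b =>
    rw [coeff_succ_X_mul]
    simp [Ec, Ac, ee_succ]

lemma Ac_zero : Ac 0 = 1 + Ec 0 := by
  ext b
  cases b with
  | zero => simp [Ac, Ec, ee_zero, aa_zero_zero]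
  | succ b => simp [Ac, Ec, aa_rec (b + 1) 0 (by omega), coeff_one]

lemma Ac_succ (m : ℕ) : Ac (m + 1) = Ec (m + 1) + ∑ j ∈ Finset.range (m + 1), Tc j * Ac (m - j) := by
  simp_rw [← Wc_eq]
  ext b
  simp [Ac, Ec, Wc, aa_rec b (m + 1) (by omega)]

noncomputable def A : PowerSeries R := mk Ac
noncomputable def E : PowerSeries R := mk Ec
noncomputable def T : PowerSeries R := mk Tc

lemma A_eq : A = T * C (Ac 0) := by
  ext1 m
  rw [coeff_mul_C]
  simp only [A, T, coeff_mk]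
  exact Ac_eq m

lemma A_rec : A = 1 + E + X * (T * A) := by
  ext1 m
  cases m with
  | zero => simp [A, E, Ac_zero]
  | succ m =>
    rw [map_add, map_add, coeff_succ_X_mul, coeff_mul, Finset.Nat.sum_antidiagonal_eq_sum_range_succ_mk]
    simp only [A, E, T, coeff_mk, Ac_succ, coeff_one]
    simp

lemma E_rec : X * E = C X * (X * A + E - C (Ec 0)) := by
  ext1 m
  rw [coeff_C_mul]
  cases m with
  | zero => simp [E]
  | succ m =>
    rw [map_sub, map_add, coeff_succ_X_mul, coeff_succ_X_mul]
    simp only [A, E, coeff_mk, coeff_C]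
    rw [Ec_eq m]
    simp

lemma S_eq : S1342 = Ac 0 := by
  unfold S1342 Ac
  congr 1
  funext n
  rw [scount_eq]

lemma final_alg {S Y z : R} (hz : z ≠ 0) (hS : S ≠ 0)
    (e1 : S * (Y - z - z * Y) ^ 2 = 4 * Y * (Y - z) * (Y - z * S))
    (e2 : 2 * S * (Y - z - z * Y) * (1 - z) = 4 * ((2 * Y - z) * (Y - z * S) + Y * (Y - z))) :
    (S * (1 + 20 * z - 8 * z ^ 2) - 32 * z) ^ 2 = S ^ 2 * (1 - 8 * z) ^ 3 := by
  have two : (2 : R) ≠ 0 := by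
    intro h
    have := congrArg (constantCoeff (R := ℚ)) h
    rw [map_ofNat, map_zero] at this
    norm_num at this
  have eA : 2 * Y ^ 3 = z * S * ((1 + z) * Y - z) := by
    apply mul_left_cancel₀ two
    linear_combination 2 * e1 - Y * e2
  have eB : S * (z - (1 + z) * Y) ^ 2 = 4 * Y ^ 2 * (Y - z) := by
    linear_combination e1
  have hY : Y ≠ 0 := by
    rintro rfl
    have : z * S * z = 0 := by linear_combination eA
    simp [hz, hS] at this
  have Q : (1 + z) * Y ^ 2 = 3 * z * Y - 2 * z ^ 2 := by
    have h : (2 * Y ^ 2) * ((1 + z) * Y ^ 2 - (3 * z * Y - 2 * z ^ 2)) = 0 := by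
      linear_combination ((1 + z) * Y - z) * eA + z * eB
    have h2 : (2 * Y ^ 2) ≠ 0 := mul_ne_zero two (pow_ne_zero _ hY)
    exact sub_eq_zero.1 ((mul_eq_zero.1 h).resolve_left h2)
  have eC : Y ^ 4 = z ^ 2 * S * (Y - z) := by
    apply mul_left_cancel₀ two
    linear_combination Y * eA + z * S * Q
  have hYz : Y - z ≠ 0 := by
    intro h
    have : Y = z := sub_eq_zero.1 h
    subst this
    have : Y ^ 3 = 0 := by linear_combination Q
    exact hY (pow_eq_zero_iff (by norm_num) |>.1 this)
  have hfin : (Y ^ 4 * (1 + 20 * z - 8 * z ^ 2) - 32 * z ^ 3 * (Y - z)) ^ 2 = Y ^ 8 * (1 - 8 * z) ^ 3 := by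
    linear_combination ((64)*z^1*Y^6 + (192)*z^2*Y^5 + (128)*z^2*Y^6 + (-64)*z^3*Y^3 + (448)*z^3*Y^4 + (192)*z^3*Y^5 + (64)*z^3*Y^6 + (-128)*z^4*Y^2 + (-256)*z^4*Y^3 + (-128)*z^4*Y^4 + (-256)*z^5*Y^1 + (-256)*z^5*Y^2 + (512)*z^6*Y^0) * Q
  have hne : (z ^ 2 * (Y - z)) ^ 2 ≠ 0 := pow_ne_zero _ (mul_ne_zero (pow_ne_zero _ hz) hYz)
  apply mul_left_cancel₀ hne
  have e8 : Y ^ 8 = (Y ^ 4) ^ 2 := by ring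
  rw [e8, eC] at hfin
  linear_combination hfin

lemma main_aux : (S1342 * (1 + 20 * X - 8 * X ^ 2) - 32 * X) ^ 2 = S1342 ^ 2 * (1 - 8 * X : R) ^ 3 := by
  rw [S_eq]
  set S := Ac 0 with hSdef
  have hS0 : constantCoeff S = 1 := by
    rw [hSdef, ← coeff_zero_eq_constantCoeff_apply]
    simp [Ac, aa_zero_zero]
  have hS : S ≠ 0 := by
    intro h; rw [h] at hS0; simp at hS0
  have hE0 : Ec 0 = S - 1 := by rw [hSdef, Ac_zero]; ring
  let u : PowerSeries R := X
  let z : PowerSeries R := C X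
  let s : PowerSeries R := C S
  have hA : A = T * s := A_eq
  have hr : A = 1 + E + u * (T * A) := A_rec
  have hE : u * E = z * (u * A + E - (s - 1)) := by
    have := E_rec
    rw [hE0] at this
    simpa using this
  let D : PowerSeries R := s * (u - z - z * u) - 2 * u * (u - z) * A
  let Δ : Polynomial R := Polynomial.C (S ^ 2) * (Polynomial.X - Polynomial.C X - Polynomial.C X * Polynomial.X) ^ 2
    - 4 * Polynomial.X * (Polynomial.X - Polynomial.C X) * (Polynomial.C S * Polynomial.X - Polynomial.C (X * S ^ 2))
  have hΔ : (Δ : PowerSeries R) = s ^ 2 * (u - z - z * u) ^ 2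
    - 4 * u * (u - z) * (s * u - z * s ^ 2) := by
    have h4 : ((4 : Polynomial R) : PowerSeries R) = 4 := by
      have : (4 : Polynomial R) = Polynomial.C 4 := rfl
      rw [this, Polynomial.coe_C]; rfl
    simp [Δ, u, z, s, h4]
  have hD : (Δ : PowerSeries R) = D * D := by
    rw [hΔ]
    have key : (u - z) * (s * A - s - u * A ^ 2) = s * z * u * A - z * s * (s - 1) := by
      have h1 : s * A - s - u * A ^ 2 = s * E := by
        linear_combination s * hr + (- u * A) * hA
      rw [h1]
      linear_combination s * hE
    simp only [D]
    linear_combination (4 * u * (u - z)) * key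
  have c0 : coeff 0 D = -(X * S) := by
    simp [D, u, z, s]
    ring
  have c1 : coeff 1 D = S * (1 + X) := by
    have hDD : D = C (-(X * S)) + u * (C (S * (1 - X)) - C 2 * ((u - z) * A)) := by
      have h2 : (C (2 : R) : PowerSeries R) = 2 := rfl
      rw [h2]
      simp only [D, s, z, map_neg, map_mul, map_sub, map_one]
      ring
    have hA0 : constantCoeff A = S := by
      rw [← coeff_zero_eq_constantCoeff_apply]
      simp [A, hSdef]
    rw [hDD, map_add]
    have hc : ∀ f : PowerSeries R, coeff 1 (u * f) = coeff 0 f := fun f => coeff_succ_X_mul 0 f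
    rw [hc]
    simp [u, z, hA0, coeff_C]
    ring
  obtain ⟨Y, q, hq⟩ := double_root D Δ hD (by
      rw [c0, PowerSeries.maximalIdeal_eq_span_X, Ideal.mem_span_singleton]
      exact ⟨-S, by ring⟩) (by
      rw [c1, PowerSeries.maximalIdeal_eq_span_X, Ideal.mem_span_singleton, X_dvd_iff]
      simp [hS0])
  have ev1 : Δ.eval Y = 0 := by rw [hq]; simp
  have ev2 : Δ.derivative.eval Y = 0 := by rw [hq]; simp [Polynomial.derivative_pow]
  simp [Δ, Polynomial.derivative_pow] at ev1 ev2
  refine final_alg (Y := Y) X_ne_zero hS ?_ ?_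
  · apply mul_left_cancel₀ hS
    linear_combination ev1
  · apply mul_left_cancel₀ hS
    linear_combination ev2

end W1342

/-- `(S(z)(1+20z−8z²) − 32z)² = S(z)²(1−8z)³`, i.e.
`S(z) = 32z / (1 + 20z − 8z² − (1−8z)^{3/2})`. -/
theorem gf_permutations_1342 :
    (S1342 * (1 + 20 * PowerSeries.X - 8 * PowerSeries.X ^ 2) - 32 * PowerSeries.X) ^ 2 =
      S1342 ^ 2 * (1 - 8 * PowerSeries.X : PowerSeries ℚ) ^ 3 := by
  exact W1342.main_aux
end

section
/- Let k ≥ 2 and let τ ∈ S_k satisfy τ(k) = k and τ(k−1) ≠ k−1. Then for every n, the map χ sending a permutation π to the pair (R_π, F_π), where R_π = {(i, π(i)) : 1 ≤ i ≤ n} and F_π is the smallest Ferrers board containing R_π, restricts to a bijection between the set S_n(τ) of τ-avoiding permutations of [n] and the set of board-minimal full rook placements on Ferrers boards in F_n that avoid the pattern τ(1)…τ(k−1). In particular, |S_n(τ)| equals the number of board-minimal τ(1)…τ(k−1)-avoiding full rook placements on boards in F_n. -/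
/-! ### Auxiliary lemmas -/

lemma aux_takeT {t : List Bool} {i : ℕ} (h : t[i]? = some true) :
    (t.take (i+1)).count true = (t.take i).count true + 1 ∧
    (t.take (i+1)).count false = (t.take i).count false := by
  rw [List.take_add_one, h]; simp

lemma aux_takeF {t : List Bool} {i : ℕ} (h : t[i]? = some false) :
    (t.take (i+1)).count true = (t.take i).count true ∧
    (t.take (i+1)).count false = (t.take i).count false + 1 := by
  rw [List.take_add_one, h]; simp

lemma aux_sum (t : List Bool) (i : ℕ) (h : i ≤ t.length) :
    (t.take i).count true + (t.take i).count false = i := by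
  have := List.count_true_add_count_false (t.take i)
  rw [this, List.length_take]; omega

lemma aux_mono (t : List Bool) (b : Bool) {i j : ℕ} (h : i ≤ j) :
    (t.take i).count b ≤ (t.take j).count b :=
  ((List.take_prefix_take_left (l := t) h).sublist).count_le b

lemma aux_full {n : ℕ} {t : List Bool} (ht : IsDyckPath n t) (i : ℕ) (hi : 2 * n ≤ i) :
    (t.take i).count true = n ∧ (t.take i).count false = n := by
  obtain ⟨h1, h2, h3⟩ := ht
  have h4 := List.count_true_add_count_false t
  rw [List.take_of_length_le (by omega)]
  omega

lemma aux_get {t : List Bool} {i : ℕ} (h : i < t.length) :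
    t[i]? = some true ∨ t[i]? = some false := by
  rw [List.getElem?_eq_getElem h]
  cases t[i] <;> simp

/-- Every square of the board is weakly south-west of a peak square. -/
lemma aux_peak {n : ℕ} {t : List Bool} (ht : IsDyckPath n t) {c r : ℕ} (h : InBoard n t c r) :
    ∃ i, t[i]? = some true ∧ t[i+1]? = some false ∧ c ≤ (t.take (i+1)).count true ∧
      (t.take (i+1)).count false + r ≤ n := by
  obtain ⟨hc, hr, i, h1, h2⟩ := h
  have hlen := ht.1
  have hi : i ≤ 2 * n := by
    by_contra hcon
    have := (aux_full ht i (by omega)).2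
    omega
  -- first index beyond i at which the number of south steps is too large
  have hex : ∃ m, n < (t.take m).count false + r :=
    ⟨2 * n, by have := (aux_full ht (2*n) le_rfl).2; omega⟩
  classical
  have hm := Nat.find_spec hex
  have hmin := fun j => Nat.find_min (H := hex) (m := j)
  set m := Nat.find hex with hmdef
  have him : i < m := by
    by_contra hcon
    have := aux_mono t false (show m ≤ i by omega)
    omega
  have hmn : m ≤ 2 * n := Nat.find_min' hex (by have := (aux_full ht (2*n) le_rfl).2; omega)
  obtain ⟨p, hp⟩ : ∃ p, m = p + 1 := ⟨m - 1, by omega⟩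
  have hp1 := hmin p (by omega)
  have hpF : t[p]? = some false := by
    rcases aux_get (t := t) (i := p) (by omega) with h | h
    · have := aux_takeT h
      rw [hp] at hm
      omega
    · exact h
  have hcp : c ≤ (t.take p).count true := h1.trans (aux_mono t true (by omega))
  have hex2 : ∃ q, (t.take p).count true ≤ (t.take q).count true := ⟨p, le_rfl⟩
  have hq := Nat.find_spec hex2
  have hqmin := fun j => Nat.find_min (H := hex2) (m := j)
  have hqp : Nat.find hex2 ≤ p := Nat.find_min' hex2 le_rfl
  set q := Nat.find hex2 with hqdef
  have hq0 : q ≠ 0 := by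
    intro h0
    rw [h0] at hq
    simp only [List.take_zero, List.count_nil] at hq
    omega
  obtain ⟨u, hu⟩ : ∃ u, q = u + 1 := ⟨q - 1, by omega⟩
  have hu1 := hqmin u (by omega)
  rw [hu] at hq
  refine ⟨u, ?_, ?_, by omega, ?_⟩
  · rcases aux_get (t := t) (i := u) (by omega) with h | h
    · exact h
    · have := aux_takeF h
      omega
  · rcases Nat.lt_or_ge (u+1) p with h | h
    · rcases aux_get (t := t) (i := u+1) (by omega) with h' | h'
      · have h3 := aux_takeT h'
        have h4 := aux_mono t true (show u + 1 + 1 ≤ p by omega)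
        omega
      · exact h'
    · have : u + 1 = p := by omega
      rw [this]; exact hpF
  · have := aux_mono t false (show u + 1 ≤ p by omega)
    omega

/-- the corner of a peak: the rook on it -/
lemma aux_rook {n : ℕ} {t : List Bool} {R : Finset (ℕ × ℕ)} (ht : IsDyckPath n t)
    (hB : BoardMinimal n t R) {c r : ℕ} (h : InBoard n t c r) :
    ∃ p ∈ R, c ≤ p.1 ∧ r ≤ p.2 := by
  obtain ⟨i, h1, h2, h3, h4⟩ := aux_peak ht h
  exact ⟨_, hB i h1 h2, h3, by simp only; omega⟩

lemma aux_board_iff {n : ℕ} {t : List Bool} {R : Finset (ℕ × ℕ)} (ht : IsDyckPath n t)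
    (hR : IsFullRookPlacement n t R) (hB : BoardMinimal n t R) {c r : ℕ} :
    InBoard n t c r ↔ 1 ≤ c ∧ 1 ≤ r ∧ ∃ p ∈ R, c ≤ p.1 ∧ r ≤ p.2 := by
  constructor
  · intro h
    exact ⟨h.1, h.2.1, aux_rook ht hB h⟩
  · rintro ⟨h1, h2, p, hp, h3, h4⟩
    obtain ⟨_, _, i, h5, h6⟩ := hR.1 p hp
    exact ⟨h1, h2, i, by omega, by omega⟩

lemma aux_le {n : ℕ} {t t' : List Bool} (ht : IsDyckPath n t) (ht' : IsDyckPath n t')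
    (h : ∀ c r, InBoard n t' c r → InBoard n t c r) (i : ℕ) (hi : i ≤ 2 * n) :
    (t'.take i).count true ≤ (t.take i).count true := by
  by_contra hcon
  have e1 := aux_sum t i (by rw [ht.1]; exact hi)
  have e2 := aux_sum t' i (by rw [ht'.1]; exact hi)
  have e3 := aux_mono t false hi
  rw [(aux_full ht _ le_rfl).2] at e3
  have hb : InBoard n t' ((t'.take i).count true) (n - (t'.take i).count false) :=
    ⟨by omega, by omega, i, le_rfl, by omega⟩
  obtain ⟨_, _, j, h1, h2⟩ := h _ _ hb
  rcases le_total i j with hij | hij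
  · have := aux_mono t false hij
    omega
  · have := aux_mono t true hij
    omega

lemma aux_unique {n : ℕ} {t t' : List Bool} {R : Finset (ℕ × ℕ)} (ht : IsDyckPath n t)
    (ht' : IsDyckPath n t') (hR : IsFullRookPlacement n t R) (hR' : IsFullRookPlacement n t' R)
    (hB : BoardMinimal n t R) (hB' : BoardMinimal n t' R) : t = t' := by
  have key : ∀ i ≤ 2 * n, (t'.take i).count true = (t.take i).count true := by
    intro i hi
    refine le_antisymm (aux_le ht ht' ?_ i hi) (aux_le ht' ht ?_ i hi)
    · intro c r h
      rw [aux_board_iff ht hR hB]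
      rwa [aux_board_iff ht' hR' hB'] at h
    · intro c r h
      rw [aux_board_iff ht' hR' hB']
      rwa [aux_board_iff ht hR hB] at h
  have hl := ht.1
  have hl' := ht'.1
  apply List.ext_getElem?
  intro i
  rcases Nat.lt_or_ge i (2*n) with hi | hi
  · have k1 := key i (by omega)
    have k2 := key (i+1) (by omega)
    rcases aux_get (t := t) (i := i) (by omega) with h | h <;>
    rcases aux_get (t := t') (i := i) (by omega) with h' | h'
    · rw [h, h']
    · have := aux_takeT h
      have := aux_takeF h'
      omega
    · have := aux_takeF h
      have := aux_takeT h'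
      omega
    · rw [h, h']
  · rw [List.getElem?_eq_none (by omega), List.getElem?_eq_none (by omega)]

/-! ### Existence of the minimal board -/

lemma aux_mem {n : ℕ} (π : Equiv.Perm (Fin n)) (p : ℕ × ℕ) :
    p ∈ permPlacement π ↔ ∃ i : Fin n, p = ((i : ℕ) + 1, (π i : ℕ) + 1) := by
  simp [permPlacement, eq_comm]

open Classical in
noncomputable def auxSouth {n : ℕ} (π : Equiv.Perm (Fin n)) (p : ℕ × ℕ) : Bool :=
  decide (∃ x : Fin n, (π x : ℕ) + p.2 + 1 = n ∧ (x : ℕ) < p.1)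

noncomputable def auxState {n : ℕ} (π : Equiv.Perm (Fin n)) : ℕ → ℕ × ℕ
  | 0 => (0, 0)
  | i + 1 => if auxSouth π (auxState π i) then ((auxState π i).1, (auxState π i).2 + 1)
      else ((auxState π i).1 + 1, (auxState π i).2)

noncomputable def auxPath {n : ℕ} (π : Equiv.Perm (Fin n)) : List Bool :=
  (List.range (2 * n)).map fun i => !auxSouth π (auxState π i)

lemma auxPath_get {n : ℕ} (π : Equiv.Perm (Fin n)) (i : ℕ) (h : i < 2 * n) :
    (auxPath π)[i]? = some (!auxSouth π (auxState π i)) := by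
  simp [auxPath, h]

lemma auxPath_count {n : ℕ} (π : Equiv.Perm (Fin n)) (i : ℕ) (h : i ≤ 2 * n) :
    ((auxPath π).take i).count true = (auxState π i).1 ∧
    ((auxPath π).take i).count false = (auxState π i).2 := by
  induction i with
  | zero => simp [auxState]
  | succ i ih =>
    have ih := ih (by omega)
    have hg := auxPath_get π i (by omega)
    cases hs : auxSouth π (auxState π i)
    · rw [hs] at hg
      have := aux_takeT (by simpa using hg)
      simp only [auxState, hs]
      simp
      omega
    · rw [hs] at hg
      have := aux_takeF (by simpa using hg)
      simp only [auxState, hs]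
      simp
      omega

lemma auxState_inv {n : ℕ} (π : Equiv.Perm (Fin n)) (i : ℕ) (h : i ≤ 2 * n) :
    (auxState π i).1 + (auxState π i).2 = i ∧ (auxState π i).1 ≤ n ∧ (auxState π i).2 ≤ n ∧
    ∀ x : Fin n, n ≤ (π x : ℕ) + (auxState π i).2 → (x : ℕ) < (auxState π i).1 := by
  induction i with
  | zero =>
    refine ⟨rfl, by simp [auxState], by simp [auxState], ?_⟩
    intro x hx
    have := (π x).isLt
    simp [auxState] at hx
    omega
  | succ i ih =>
    obtain ⟨i1, i2, i3, i4⟩ := ih (by omega)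
    cases hs : auxSouth π (auxState π i)
    · simp only [auxState, hs]
      simp only [auxSouth, decide_eq_false_iff_not, not_exists, not_and] at hs
      simp
      refine ⟨by omega, ?_, i3, fun x hx => by have := i4 x hx; omega⟩
      by_contra hcon
      have hlt : (auxState π i).2 < n := by omega
      have hh := hs (π.symm ⟨n - 1 - (auxState π i).2, by omega⟩) (by simp; omega)
      have := (π.symm ⟨n - 1 - (auxState π i).2, by omega⟩).isLt
      omega
    · simp only [auxState, hs]
      simp only [auxSouth, decide_eq_true_eq] at hs
      obtain ⟨x, hx1, hx2⟩ := hs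
      simp
      refine ⟨by omega, i2, by omega, fun y hy => ?_⟩
      rcases Nat.lt_or_ge ((π y : ℕ) + (auxState π i).2) n with h' | h'
      · have : π y = π x := Fin.ext (by omega)
        rw [π.injective this]; exact hx2
      · exact i4 y h'

lemma auxState_le {n : ℕ} (π : Equiv.Perm (Fin n)) (i : ℕ) (h : i ≤ 2 * n) :
    (auxState π i).2 ≤ (auxState π i).1 := by
  obtain ⟨i1, i2, i3, i4⟩ := auxState_inv π i h
  set e := (auxState π i).1
  set s := (auxState π i).2
  let g : Fin s → Fin e := fun a =>
    ⟨π.symm ⟨n - 1 - a, by have := a.isLt; omega⟩, i4 _ (by have := a.isLt; simp; omega)⟩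
  have hg : Function.Injective g := by
    intro a b hab
    simp only [g, Fin.mk.injEq] at hab
    have := π.symm.injective (Fin.ext hab)
    simp at this
    have := a.isLt
    have := b.isLt
    apply Fin.ext
    omega
  simpa using Fintype.card_le_of_injective g hg

lemma auxPath_dyck {n : ℕ} (π : Equiv.Perm (Fin n)) : IsDyckPath n (auxPath π) := by
  have hl : (auxPath π).length = 2 * n := by simp [auxPath]
  have hfin : (auxPath π).take (2 * n) = auxPath π := List.take_of_length_le (by omega)
  refine ⟨hl, ?_, ?_⟩
  · have h1 := auxPath_count π (2*n) le_rfl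
    have h2 := auxState_inv π (2*n) le_rfl
    rw [hfin] at h1
    omega
  · intro i
    rcases le_total i (2*n) with h | h
    · have h1 := auxPath_count π i h
      have h2 := auxState_le π i h
      omega
    · have : (auxPath π).take i = (auxPath π).take (2*n) := by
        rw [hfin, List.take_of_length_le (by omega)]
      rw [this]
      have h1 := auxPath_count π (2*n) le_rfl
      have h2 := auxState_le π (2*n) le_rfl
      omega

lemma auxPath_min {n : ℕ} (π : Equiv.Perm (Fin n)) :
    BoardMinimal n (auxPath π) (permPlacement π) := by
  intro i h1 h2
  have hl : (auxPath π).length = 2 * n := by simp [auxPath]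
  have hi : i + 1 < 2 * n := by
    by_contra hcon
    rw [List.getElem?_eq_none (by omega)] at h2
    simp at h2
  have hc := auxPath_count π i (by omega)
  have hc' := auxPath_count π (i+1) (by omega)
  have ht := aux_takeT h1
  rw [auxPath_get π i (by omega)] at h1
  rw [auxPath_get π (i+1) (by omega)] at h2
  simp only [Option.some.injEq, Bool.not_eq_true', Bool.not_eq_false'] at h1 h2
  simp only [auxSouth, decide_eq_false_iff_not, not_exists, not_and] at h1
  simp only [auxSouth, decide_eq_true_eq] at h2
  obtain ⟨x, hx1, hx2⟩ := h2
  have := h1 x (by omega)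
  rw [aux_mem]
  exact ⟨x, by ext <;> simp only <;> omega⟩

lemma auxPath_full {n : ℕ} (π : Equiv.Perm (Fin n)) :
    IsFullRookPlacement n (auxPath π) (permPlacement π) := by
  refine ⟨?_, ?_, ?_⟩
  · intro p hp
    rw [aux_mem] at hp
    obtain ⟨x, rfl⟩ := hp
    refine ⟨by simp, by simp, ?_⟩
    classical
    have hx := x.isLt
    have hpx := (π x).isLt
    have hlast : n ≤ (π x : ℕ) + (auxState π (2*n)).2 := by
      have := auxState_inv π (2*n) le_rfl
      omega
    have hex : ∃ m, n ≤ (π x : ℕ) + (auxState π m).2 := ⟨2*n, hlast⟩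
    have hm := Nat.find_spec hex
    have hmin := fun j => Nat.find_min (H := hex) (m := j)
    have hle : Nat.find hex ≤ 2 * n := Nat.find_min' hex hlast
    set m := Nat.find hex with hmdef
    have hm0 : m ≠ 0 := by
      intro h0
      rw [h0] at hm
      simp [auxState] at hm
      omega
    obtain ⟨u, hu⟩ : ∃ u, m = u + 1 := ⟨m - 1, by omega⟩
    have hu1 := hmin u (by omega)
    have hc := auxPath_count π u (by omega)
    have hI := (auxState_inv π (u+1) (by omega)).2.2.2 x (by rw [← hu]; exact hm)
    refine ⟨u, ?_, by simp only; omega⟩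
    rw [hu] at hm
    cases hs : auxSouth π (auxState π u)
    · simp [auxState, hs] at hm
      omega
    · simp [auxState, hs] at hI
      simp only
      omega
  · intro c h1 h2
    refine ⟨(c, (π ⟨c-1, by omega⟩ : ℕ) + 1), ⟨?_, rfl⟩, ?_⟩
    · rw [aux_mem]
      exact ⟨⟨c-1, by omega⟩, by ext <;> simp; omega⟩
    · rintro p ⟨hp, hpc⟩
      rw [aux_mem] at hp
      obtain ⟨x, rfl⟩ := hp
      simp only at hpc
      have : (⟨c-1, by omega⟩ : Fin n) = x := Fin.ext (by simp only; omega)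
      rw [this, hpc]
  · intro r h1 h2
    refine ⟨((π.symm ⟨r-1, by omega⟩ : ℕ) + 1, r), ⟨?_, rfl⟩, ?_⟩
    · rw [aux_mem]
      exact ⟨π.symm ⟨r-1, by omega⟩, by ext <;> simp; omega⟩
    · rintro p ⟨hp, hpc⟩
      rw [aux_mem] at hp
      obtain ⟨x, rfl⟩ := hp
      simp only at hpc
      have : (⟨r-1, by omega⟩ : Fin n) = π x := Fin.ext (by simp only; omega)
      rw [this, hpc]
      simp

lemma aux_inj {n : ℕ} {π π' : Equiv.Perm (Fin n)} (h : permPlacement π = permPlacement π') :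
    π = π' := by
  ext x
  have : ((x : ℕ) + 1, (π x : ℕ) + 1) ∈ permPlacement π := (aux_mem _ _).2 ⟨x, rfl⟩
  rw [h, aux_mem] at this
  obtain ⟨y, hy⟩ := this
  simp only [Prod.mk.injEq] at hy
  have : x = y := Fin.ext (by omega)
  subst this
  omega

lemma aux_bound {n : ℕ} {t : List Bool} {R : Finset (ℕ × ℕ)} (ht : IsDyckPath n t)
    (hR : IsFullRookPlacement n t R) {p : ℕ × ℕ} (hp : p ∈ R) :
    1 ≤ p.1 ∧ p.1 ≤ n ∧ 1 ≤ p.2 ∧ p.2 ≤ n := by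
  obtain ⟨h1, h2, i, h3, h4⟩ := hR.1 p hp
  have h5 : (t.take i).count true ≤ n := by
    have := (List.take_sublist i t).count_le true
    rw [ht.2.1] at this
    exact this
  omega

lemma aux_exists_perm {n : ℕ} {t : List Bool} {R : Finset (ℕ × ℕ)} (ht : IsDyckPath n t)
    (hR : IsFullRookPlacement n t R) : ∃ π : Equiv.Perm (Fin n), permPlacement π = R := by
  have h : ∀ x : Fin n, ∃ y : Fin n, ((x : ℕ) + 1, (y : ℕ) + 1) ∈ R := by
    intro x
    obtain ⟨p, ⟨hp, hpc⟩, _⟩ := hR.2.1 (x + 1) (by omega) (by have := x.isLt; omega)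
    have hb := aux_bound ht hR hp
    refine ⟨⟨p.2 - 1, by omega⟩, ?_⟩
    have : ((x : ℕ) + 1, p.2 - 1 + 1) = p := by ext <;> simp only <;> omega
    simpa only [this] using hp
  choose g hg using h
  have hinj : Function.Injective g := by
    intro x y hxy
    have h1 := hg x
    have h2 := hg y
    rw [hxy] at h1
    have := (hR.2.2 ((g y : ℕ) + 1) (by omega) (by have := (g y).isLt; omega)).unique
      ⟨h1, rfl⟩ ⟨h2, rfl⟩
    simp only [Prod.mk.injEq] at this
    exact Fin.ext (by omega)
  refine ⟨Equiv.ofBijective g (Finite.injective_iff_bijective.1 hinj), ?_⟩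
  ext p
  rw [aux_mem]
  simp only [Equiv.ofBijective_apply]
  constructor
  · rintro ⟨x, rfl⟩
    exact hg x
  · intro hp
    have hb := aux_bound ht hR hp
    refine ⟨⟨p.1 - 1, by omega⟩, ?_⟩
    refine (hR.2.1 p.1 (by omega) (by omega)).unique ⟨hp, rfl⟩ ⟨hg _, ?_⟩
    simp only
    omega

lemma aux_contains
    (k : ℕ) (hk : 2 ≤ k) (l1 : k - 1 < k) (l2 : k - 2 < k)
    (l3 : ∀ a : Fin (k - 1), a.1 < k) (τ : Equiv.Perm (Fin k))
    (hfix : (τ ⟨k - 1, l1⟩ : ℕ) = k - 1)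
    (hnfix : (τ ⟨k - 2, l2⟩ : ℕ) ≠ k - 2)
    (τ' : Equiv.Perm (Fin (k - 1)))
    (hτ' : ∀ a : Fin (k - 1), (τ' a : ℕ) = (τ ⟨a.1, l3 a⟩ : ℕ))
    (n : ℕ) (t : List Bool) (π : Equiv.Perm (Fin n)) (ht : IsDyckPath n t)
    (hR : IsFullRookPlacement n t (permPlacement π)) (hB : BoardMinimal n t (permPlacement π)) :
    PlacementContains τ' n t (permPlacement π) ↔ PermContains τ π := by
  constructor
  · rintro ⟨i, hi, f, h1, h2, h3⟩
    choose g hg using fun a => (aux_mem π (f a)).1 (h1 a).1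
    -- last and top
    let l : Fin (k-1) := ⟨k - 2, by omega⟩
    let m : Fin (k-1) := τ'.symm ⟨k - 2, by omega⟩
    have hm : (τ' m : ℕ) = k - 2 := by simp [m]
    have hl : (τ' l : ℕ) < k - 2 := by
      have h4 := hτ' l
      have h5 := (τ' l).isLt
      simp only [l] at h4 h5 ⊢
      omega
    have hml : m < l := by
      have h4 : m ≠ l := by intro h; rw [h] at hm; omega
      have h5 := m.isLt
      have h6 : (m : ℕ) ≠ k - 2 := fun h => h4 (Fin.ext h)
      show (m : ℕ) < k - 2
      omega
    have hle1 : ∀ a, (f a).1 ≤ (f l).1 := by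
      intro a
      rcases eq_or_ne a l with rfl | h
      · exact le_rfl
      · refine (h2 a l ?_).le
        have : (a : ℕ) ≠ k - 2 := fun h' => h (Fin.ext h')
        have := a.isLt
        show (a : ℕ) < k - 2
        omega
    have hle2 : ∀ a, (f a).2 ≤ (f m).2 := by
      intro a
      rcases eq_or_ne a m with rfl | h
      · exact le_rfl
      · refine (h3 a m ?_).le
        have : (τ' a : ℕ) ≠ τ' m := fun h' => h (τ'.injective (Fin.ext h'))
        have := (τ' a).isLt
        show (τ' a : ℕ) < τ' m
        omega
    have hlm2 : (f l).2 < (f m).2 := h3 l m (by show (τ' l : ℕ) < τ' m; omega)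
    have hlm1 : (f m).1 < (f l).1 := h2 m l hml
    have hb : InBoard n t (f l).1 (f m).2 :=
      ⟨by rw [hg l]; simp, by rw [hg m]; simp, i, (h1 l).2.1, by have := (h1 m).2.2; omega⟩
    obtain ⟨p, hp, hp1, hp2⟩ := aux_rook ht hB hb
    obtain ⟨z, rfl⟩ := (aux_mem _ _).1 hp
    simp only at hp1 hp2
    have hgl := hg l
    have hgm := hg m
    rw [hgl] at hp1 hlm2 hlm1
    rw [hgm] at hp2 hlm2 hlm1
    simp only at hp1 hp2 hlm1 hlm2
    have hzl : z ≠ g l := by rintro rfl; omega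
    have hzm : z ≠ g m := by rintro rfl; omega
    have hz1 : ∀ a, (g a : ℕ) < z := by
      intro a
      have h4 := hle1 a
      rw [hg a, hgl] at h4
      simp only at h4
      have : (z : ℕ) ≠ g l := fun h => hzl (Fin.ext h)
      omega
    have hz2 : ∀ a, (π (g a) : ℕ) < π z := by
      intro a
      have h4 := hle2 a
      rw [hg a, hgm] at h4
      simp only at h4
      have : (π z : ℕ) ≠ π (g m) := fun h => hzm (π.injective (Fin.ext h))
      omega
    refine ⟨fun a => if h : (a : ℕ) < k - 1 then g ⟨a, h⟩ else z, ?_, ?_⟩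
    · intro a b hab
      have hab' : (a : ℕ) < b := hab
      have hbk := b.isLt
      have ha : (a : ℕ) < k - 1 := by omega
      simp only [ha, dif_pos]
      split_ifs with hb'
      · have := h2 ⟨a, ha⟩ ⟨b, hb'⟩ hab
        rw [hg, hg] at this
        simp only at this
        exact Fin.lt_def.2 (by omega)
      · exact Fin.lt_def.2 (hz1 _)
    · intro a b hab
      have ha : (a : ℕ) < k - 1 := by
        by_contra hcon
        have e : a = ⟨k-1, by omega⟩ := Fin.ext (by have := a.isLt; simp only; omega)
        have e2 : (τ a : ℕ) = k - 1 := by rw [e]; exact hfix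
        have := (τ b).isLt
        have : (τ a : ℕ) < τ b := hab
        omega
      simp only [ha, dif_pos]
      split_ifs with hb'
      · have := h3 ⟨a, ha⟩ ⟨b, hb'⟩ (by
          have e1 := hτ' ⟨a, ha⟩
          have e2 := hτ' ⟨b, hb'⟩
          have : (τ a : ℕ) < τ b := hab
          rw [Fin.lt_def, e1, e2]
          exact this)
        rw [hg, hg] at this
        simp only at this
        exact Fin.lt_def.2 (by omega)
      · exact Fin.lt_def.2 (hz2 _)
  · rintro ⟨f, hf, h⟩
    let z : Fin n := f ⟨k-1, by omega⟩
    obtain ⟨_, _, i, h1, h2⟩ := hR.1 ((z : ℕ) + 1, (π z : ℕ) + 1) ((aux_mem _ _).2 ⟨z, rfl⟩)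
    simp only at h1 h2
    have hi : i ≤ 2 * n := by
      by_contra hcon
      have := (aux_full ht i (by omega)).2
      omega
    let c : Fin (k-1) → Fin k := fun a => ⟨a, by have := a.isLt; omega⟩
    refine ⟨i, hi, fun a => ((f (c a) : ℕ) + 1, (π (f (c a)) : ℕ) + 1), ?_, ?_, ?_⟩
    · intro a
      refine ⟨(aux_mem _ _).2 ⟨f (c a), rfl⟩, ?_, ?_⟩
      · have : f (c a) < z := hf (by show (a : ℕ) < k - 1; exact a.isLt)
        have : (f (c a) : ℕ) < z := this
        simp only
        omega
      · have : π (f (c a)) < π z := h _ _ (by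
          rw [Fin.lt_def, hfix, ← hτ' a]
          exact (τ' a).isLt)
        have : (π (f (c a)) : ℕ) < π z := this
        simp only
        omega
    · intro a b hab
      have : f (c a) < f (c b) := hf (by show (a : ℕ) < b; exact hab)
      have : (f (c a) : ℕ) < f (c b) := this
      simp only
      omega
    · intro a b hab
      have : π (f (c a)) < π (f (c b)) := h _ _ (by
          rw [Fin.lt_def, ← hτ' a, ← hτ' b]
          exact hab)
      have : (π (f (c a)) : ℕ) < π (f (c b)) := this
      simp only
      omega

/-- If `τ ∈ S_k` with `τ(k) = k` and `τ(k−1) ≠ k−1`, then the map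
`χ : π ↦ (R_π, F_π)` restricts to a bijection between `S_n(τ)` and the board-minimal
full rook placements on boards of `F_n` avoiding `τ(1)…τ(k−1)`; in particular the two
sets are equinumerous. -/
theorem chi_bijection_minimal_placements
    (k : ℕ) (hk : 2 ≤ k) (τ : Equiv.Perm (Fin k))
    (hfix : (τ ⟨k - 1, by omega⟩ : ℕ) = k - 1)
    (hnfix : (τ ⟨k - 2, by omega⟩ : ℕ) ≠ k - 2)
    (τ' : Equiv.Perm (Fin (k - 1)))
    (hτ' : ∀ a : Fin (k - 1), (τ' a : ℕ) = (τ ⟨a.1, by have := a.isLt; omega⟩ : ℕ))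
    (n : ℕ) :
    (∀ π : Equiv.Perm (Fin n), PermAvoids τ π →
      ∃! tR : List Bool × Finset (ℕ × ℕ),
        tR ∈ MinPlacements n τ' ∧ tR.2 = permPlacement π) ∧
    (∀ tR ∈ MinPlacements n τ',
      ∃! π : Equiv.Perm (Fin n), PermAvoids τ π ∧ permPlacement π = tR.2) ∧
    scount τ n = (MinPlacements n τ').ncard := by
  have key := aux_contains k hk (by omega) (by omega)
    (fun a => by have := a.isLt; omega) τ hfix hnfix τ' hτ' n
  have P1 : ∀ π : Equiv.Perm (Fin n), PermAvoids τ π →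
      ∃! tR : List Bool × Finset (ℕ × ℕ),
        tR ∈ MinPlacements n τ' ∧ tR.2 = permPlacement π := by
    intro π hπ
    refine ⟨(auxPath π, permPlacement π), ⟨⟨auxPath_dyck π, auxPath_full π, auxPath_min π, ?_⟩,
      rfl⟩, ?_⟩
    · intro hc
      exact hπ ((key _ π (auxPath_dyck π) (auxPath_full π) (auxPath_min π)).1 hc)
    · rintro ⟨t, R⟩ ⟨⟨h1, h2, h3, _⟩, h5⟩
      simp only at h1 h2 h3 h5
      subst h5
      rw [aux_unique h1 (auxPath_dyck π) h2 (auxPath_full π) h3 (auxPath_min π)]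
  have P2 : ∀ tR ∈ MinPlacements n τ',
      ∃! π : Equiv.Perm (Fin n), PermAvoids τ π ∧ permPlacement π = tR.2 := by
    rintro ⟨t, R⟩ ⟨h1, h2, h3, h4⟩
    simp only at h1 h2 h3 h4
    obtain ⟨π, rfl⟩ := aux_exists_perm h1 h2
    exact ⟨π, ⟨fun hc => h4 ((key t π h1 h2 h3).2 hc), rfl⟩, fun π' h' => aux_inj h'.2⟩
  refine ⟨P1, P2, ?_⟩
  rw [← Nat.card_coe_set_eq, scount]
  choose F hF using fun x : MinPlacements n τ' => (P2 x.1 x.2).exists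
  refine (Nat.card_congr (Equiv.ofBijective
    (fun x : MinPlacements n τ' =>
      (⟨F x, (hF x).1⟩ : {π : Equiv.Perm (Fin n) // PermAvoids τ π})) ⟨?_, ?_⟩)).symm
  · intro x y hxy
    have hxy : F x = F y := congrArg Subtype.val hxy
    apply Subtype.ext
    refine (P1 (F x) (hF x).1).unique ⟨x.2, (hF x).2.symm⟩ ⟨y.2, ?_⟩
    rw [hxy]
    exact (hF y).2.symm
  · rintro ⟨π, hπ⟩
    obtain ⟨tR, ⟨h1, h2⟩, _⟩ := P1 π hπ
    refine ⟨⟨tR, h1⟩, Subtype.ext ?_⟩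
    exact aux_inj ((hF ⟨tR, h1⟩).2.trans h2)
end
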